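/- arXiv:2106.15566 — 9 statements merged into one kernel-verified Lean document; each statement's English description precedes it below -/
import Mathlib

section
/- Let b and p be positive integers with b ≥ 3. Then there exist b^p points z_1,…,z_{b^p} ∈ ℝ^p such that (1) for every coordinate j ∈ {1,…,p}, the multiset of j-th coordinates {z_1(j),…,z_{b^p}(j)} is exactly the set {0, 1, …, b^p − 1} (i.e., it forms a permutation of {0,…,b^p−1}), and (2) for all distinct indices i, i′, the Euclidean distance satisfies ‖z_i − z_{i′}‖₂ ≥ b^{p−1}/2. -/
/-!
Write `B = b ^ (p - 1)`. Let `σ` be the cyclic shift of the `p` base-`b` digits, a permutation of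
`{0, …, b ^ p - 1}`, and let the `j`-th coordinate of the point `z i` be `σ ^ j` applied to `i`.
Since `σ n = b * n - (n / B) * (b ^ p - 1)`, the coordinate differences `d j` of two points satisfy
`b * d j - d (j + 1) = δ * (b ^ p - 1)` with `δ` an integer. If every `|d j|` were less than
`B / 2`, the left-hand side would be less than `(b + 1) * B / 2 ≤ b * B - 1` in absolute value, so
`δ = 0` and `d (j + 1) = b * d j`. Hence `d (p - 1) = B * d 0`, whose absolute value is at least `B`
for distinct points: a contradiction. So some coordinate alone already gives the distance bound.
-/

/-- Cyclic left shift of the `q + 1` base-`b` digits, moving the leading digit to the end. -/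
lemma exists_shift (b q : ℕ) (hb : 0 < b) :
    ∃ σ : Equiv.Perm (Fin (b ^ (q + 1))),
      ∀ n, (σ n : ℕ) = ((n : ℕ) % b ^ q) * b + (n : ℕ) / b ^ q := by
  have hB : 0 < b ^ q := pow_pos hb q
  have hdiv : ∀ n : Fin (b ^ (q + 1)), (n : ℕ) / b ^ q < b := fun n =>
    Nat.div_lt_of_lt_mul (by simpa [pow_succ] using n.2)
  let f : Fin (b ^ (q + 1)) → Fin (b ^ (q + 1)) := fun n =>
    ⟨((n : ℕ) % b ^ q) * b + (n : ℕ) / b ^ q, by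
      have h1 := hdiv n
      have h2 := Nat.mod_lt (n : ℕ) hB
      have h3 := pow_succ b q
      nlinarith⟩
  have hf : Function.Injective f := by
    intro n m h
    have h : ((n : ℕ) % b ^ q) * b + (n : ℕ) / b ^ q
        = ((m : ℕ) % b ^ q) * b + (m : ℕ) / b ^ q := congrArg Fin.val h
    have hd : (n : ℕ) / b ^ q = (m : ℕ) / b ^ q := by
      have := congrArg (· % b) h
      simpa [Nat.mul_add_mod', Nat.mod_eq_of_lt (hdiv n), Nat.mod_eq_of_lt (hdiv m)] using this
    have hm : (n : ℕ) % b ^ q = (m : ℕ) % b ^ q := by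
      rw [hd] at h
      exact Nat.eq_of_mul_eq_mul_right hb (Nat.add_right_cancel h)
    apply Fin.ext
    rw [← Nat.div_add_mod (n : ℕ) (b ^ q), ← Nat.div_add_mod (m : ℕ) (b ^ q), hd, hm]
  exact ⟨Equiv.ofBijective f (Finite.injective_iff_bijective.mp hf), fun n => rfl⟩

/-- If consecutive terms `x`, `y` are small and `b * x - y` is a multiple of `b * B - 1`, then
that multiple is zero. -/
lemma eq_mul_of_small (b B x y k : ℤ) (hb : 3 ≤ b) (hB : 1 ≤ B)
    (hx : 2 * |x| < B) (hy : 2 * |y| < B) (h : b * x - y = k * (b * B - 1)) : y = b * x := by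
  have h1 : 2 * |b * x - y| < (b + 1) * B := by
    have h3 := abs_sub (b * x) y
    rw [abs_mul, abs_of_pos (by linarith : 0 < b)] at h3
    nlinarith
  have hpos : 0 < b * B - 1 := by nlinarith
  have hk : k = 0 := by
    by_contra hk
    have h2 : 1 ≤ |k| := Int.one_le_abs hk
    rw [h, abs_mul, abs_of_pos hpos] at h1
    nlinarith
  rw [hk] at h
  linarith

theorem grid_construction (b p : ℕ) (hp : 0 < p) (hb : 3 ≤ b) :
    ∃ z : Fin (b ^ p) → EuclideanSpace ℝ (Fin p),
      (∀ j : Fin p, ∃ π : Equiv.Perm (Fin (b ^ p)),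
        ∀ i : Fin (b ^ p), z i j = ((π i : ℕ) : ℝ)) ∧
      (∀ i i' : Fin (b ^ p), i ≠ i' →
        ((b ^ (p - 1) : ℕ) : ℝ) / 2 ≤ ‖z i - z i'‖) := by
  obtain ⟨q, rfl⟩ : ∃ q, p = q + 1 := ⟨p - 1, by omega⟩
  obtain ⟨σ, hσ⟩ := exists_shift b q (by omega)
  refine ⟨fun i => WithLp.toLp 2 fun j => (((σ ^ (j : ℕ)) i : ℕ) : ℝ),
    fun j => ⟨σ ^ (j : ℕ), fun i => rfl⟩, fun i i' hne => ?_⟩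
  by_contra! hlt
  let d : ℕ → ℤ := fun j => (((σ ^ j) i : ℕ) : ℤ) - (((σ ^ j) i' : ℕ) : ℤ)
  have hsmall : ∀ j ≤ q, 2 * |d j| < (b : ℤ) ^ q := by
    intro j hj
    have h1 := (PiLp.norm_apply_le
      (WithLp.toLp 2 (fun j : Fin (q + 1) => (((σ ^ (j : ℕ)) i : ℕ) : ℝ))
        - WithLp.toLp 2 (fun j : Fin (q + 1) => (((σ ^ (j : ℕ)) i' : ℕ) : ℝ)))
      ⟨j, by omega⟩).trans_lt hlt
    simp only [PiLp.sub_apply, Real.norm_eq_abs, Nat.add_sub_cancel] at h1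
    have h2 : (2 : ℝ) * |(d j : ℝ)| < (b : ℝ) ^ q := by
      simp only [d]
      push_cast at h1 ⊢
      linarith
    exact_mod_cast h2
  -- `σ n = b * n - (n / B) * (b * B - 1)`
  have hshift : ∀ n, ((σ n : ℕ) : ℤ)
      = b * (n : ℕ) - (((n : ℕ) / b ^ q : ℕ) : ℤ) * (b * (b : ℤ) ^ q - 1) := by
    intro n
    have h1 : (b : ℤ) ^ q * (((n : ℕ) / b ^ q : ℕ) : ℤ) + (((n : ℕ) % b ^ q : ℕ) : ℤ)
        = ((n : ℕ) : ℤ) := by exact_mod_cast Nat.div_add_mod (n : ℕ) (b ^ q)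
    rw [hσ, Nat.cast_add, Nat.cast_mul]
    linear_combination (b : ℤ) * h1
  have hB : (1 : ℤ) ≤ (b : ℤ) ^ q := one_le_pow₀ (by omega)
  have hd : ∀ j ≤ q, d j = (b : ℤ) ^ j * d 0 := by
    intro j
    induction j with
    | zero => simp
    | succ j ih =>
      intro hj
      have h1 : d (j + 1) = b * d j := by
        refine eq_mul_of_small b ((b : ℤ) ^ q) (d j) (d (j + 1))
          (((((σ ^ j) i : ℕ) / b ^ q : ℕ) : ℤ) - ((((σ ^ j) i' : ℕ) / b ^ q : ℕ) : ℤ))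
          (by omega) hB (hsmall j (by omega)) (hsmall _ hj) ?_
        simp only [d, pow_succ' σ, Equiv.Perm.mul_apply, hshift]
        ring
      rw [h1, ih (by omega)]
      ring
  have h0 : 1 ≤ |d 0| := by
    apply Int.one_le_abs
    intro h
    apply hne
    apply Fin.ext
    simp only [d, pow_zero, Equiv.Perm.one_apply] at h
    omega
  have hq := hsmall q le_rfl
  rw [hd q le_rfl, abs_mul, abs_of_pos (by linarith)] at hq
  nlinarith
end

section
/- Let T be a finite set of points in ℝ^d, each x ∈ T equipped with an assigned centroid σ_x ∈ Y, a length ℓ_x satisfying ‖x − σ_x‖_∞ ≤ ℓ_x ≤ L/16, and a type t_x : {1,…,d} → {0,1,2} with ‖t_x‖₀ ≤ 1, t_x(j*) = 0, and x(j*) ≠ σ_x(j*), such that for every j ∈ {1,…,d}: t_x(j) = 1 implies |x(j) − b₁(j)| ≤ ℓ_x, and t_x(j) = 2 implies |x(j) − b₂(j)| ≤ ℓ_x. If every x ∈ T satisfies q_x / L > 2^{11} · (ℓ_x / L)^{1/(d − ‖t_x‖₀)}, then the Lebesgue measure of ⋃_{x∈T} W_x is at most L/4. -/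
/-!
By the Vitali covering lemma, the union of the intervals `W x` has measure at most `6 * ∑ ℓ x` over
a subfamily `u` whose intervals are pairwise disjoint. Two members of `u` lying in the same
direction from their centroids satisfy `q x ≤ ‖σ x - σ y‖` whenever `σ y` is the further one along
`jstar`: by disjointness (`le_of_disjoint_Ico`), `σ y` competes in the infimum defining `q x`.

This separation is one-sided, since it says nothing about `q y`, so balls around the centroids may
overlap. Instead place a box of side `q x / 2` at distance between `q x / 2` and `q x` in front of
each centroid. If two such boxes meet, the gap forces `q y < 2 * q x`, and then all coordinates of
the two centroids differ by less than `q x`, a contradiction. The boxes are therefore disjoint, lie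
in a cube of side `3 * L`, and give `∑ q x ^ d ≤ (6 * L) ^ d` (`packing_bound`). As
`ℓ x / L ≤ (q x / (2 ^ 11 * L)) ^ d` for points of type zero, those lengths sum to at most
`L * (6 / 2 ^ 11) ^ d`.

A point with one nonzero type coordinate `j` only has `ℓ x / L ≤ (q x / (2 ^ 11 * L)) ^ (d - 1)`.
Group these points by `j` and by the face they are close to. Within a group the centroids are
within `2 * ℓ x` of a common hyperplane, and `ℓ x` is far below `q x`, so coordinate `j` never
witnesses the separation, and the packing takes place in the other `d - 1` coordinates. Adding up
the two directions and the `1 + 2 * d` groups in each gives less than `L / 4` (`numeric_bound`).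
-/

open MeasureTheory

/-- If finitely many centers in a cube of side `L` carry radii `r i ≤ L`, and a center further along
the coordinate `a` with radius less than `2 * r i` is at sup-distance at least `r i`, then the
`r i` satisfy a volume bound. The boxes of side `r i / 2` placed in front of the centers, at
distance between `r i / 2` and `r i` along `a`, are pairwise disjoint: leaving a gap of `r i / 2`
forces two intersecting boxes to have comparable radii. -/
lemma packing_bound {ι J : Type*} [Fintype J] (a : J) (u : Finset ι)
    (c : ι → J → ℝ) (r : ι → ℝ) (lo : J → ℝ) (L : ℝ) (hL : 0 < L)
    (hr : ∀ i ∈ u, 0 < r i) (hrL : ∀ i ∈ u, r i ≤ L)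
    (hlo : ∀ i ∈ u, ∀ j, lo j ≤ c i j) (hhi : ∀ i ∈ u, ∀ j, c i j ≤ lo j + L)
    (hsep : ∀ i ∈ u, ∀ k ∈ u, i ≠ k → c i a ≤ c k a → r k < 2 * r i →
      ∃ j, r i ≤ |c i j - c k j|) :
    ∑ i ∈ u, r i ^ Fintype.card J ≤ (6 * L) ^ Fintype.card J := by
  classical
  let f : ι → J → ℝ := fun i j => if j = a then c i j + r i / 2 else c i j - r i / 4
  let B : ι → Set (J → ℝ) := fun i => Set.pi Set.univ fun j => Set.Ioo (f i j) (f i j + r i / 2)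
  have key : ∀ i ∈ u, ∀ k ∈ u, i ≠ k → c i a ≤ c k a → Disjoint (B i) (B k) := by
    intro i hi k hk hik hle
    rw [Set.disjoint_left]
    intro p hpi hpk
    simp only [B, f, Set.mem_pi, Set.mem_univ, true_implies, Set.mem_Ioo] at hpi hpk
    have h1 := hpi a
    have h2 := hpk a
    simp only [if_true] at h1 h2
    have hrk : r k < 2 * r i := by linarith
    obtain ⟨j, hj⟩ := hsep i hi k hk hik hle hrk
    have := hr i hi
    have := hr k hk
    by_cases hja : j = a
    · subst hja
      have : |c i j - c k j| < r i := by rw [abs_lt]; constructor <;> linarith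
      linarith
    · have h3 := hpi j
      have h4 := hpk j
      simp only [hja, if_false] at h3 h4
      have : |c i j - c k j| < r i := by rw [abs_lt]; constructor <;> linarith
      linarith
  have hdisj : Set.PairwiseDisjoint (u : Set ι) B := by
    intro i hi k hk hik
    rcases le_total (c i a) (c k a) with h | h
    · exact key i hi k hk hik h
    · exact (key k hk i hi hik.symm h).symm
  have hsub : (⋃ i ∈ u, B i) ⊆ Set.pi Set.univ fun j => Set.Ioo (lo j - L) (lo j + 2 * L) := by
    intro p hp
    simp only [Set.mem_iUnion] at hp
    obtain ⟨i, hi, hp⟩ := hp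
    intro j _
    have h1 := hp j (Set.mem_univ j)
    simp only [f, Set.mem_Ioo] at h1
    have := hr i hi
    have := hrL i hi
    have := hlo i hi j
    have := hhi i hi j
    split_ifs at h1 <;> constructor <;> linarith
  have hvB : ∀ i ∈ u, volume (B i) = ENNReal.ofReal ((r i / 2) ^ Fintype.card J) := by
    intro i hi
    simp only [B]
    rw [Real.volume_pi_Ioo]
    simp only [add_sub_cancel_left, Finset.prod_const, Finset.card_univ]
    rw [ENNReal.ofReal_pow (by have := hr i hi; positivity)]
  have hv := measure_mono (μ := volume) hsub
  rw [measure_biUnion_finset hdisj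
    (fun i _ => MeasurableSet.univ_pi fun j => measurableSet_Ioo), Finset.sum_congr rfl hvB,
    Real.volume_pi_Ioo, ← ENNReal.ofReal_sum_of_nonneg
      (fun i hi => by have := hr i hi; positivity)] at hv
  have h3 : ∀ j : J, lo j + 2 * L - (lo j - L) = 3 * L := fun j => by ring
  simp only [h3, Finset.prod_const, Finset.card_univ] at hv
  rw [← ENNReal.ofReal_pow (by positivity), ENNReal.ofReal_le_ofReal_iff (by positivity)] at hv
  simp only [div_pow] at hv
  rw [← Finset.sum_div, div_le_iff₀ (by positivity), ← mul_pow] at hv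
  calc _ ≤ _ := hv
    _ = _ := by ring_nf

/-- Lengths `ℓ i` with `ℓ i / L` at most the `n`-th power of `r i / (2 ^ 11 * L)` have small sum
when the radii `r i` are separated in the `n` coordinates of `S`. -/
lemma group_bound {ι : Type*} {d : ℕ} (S : Finset (Fin d)) (a : Fin d) (ha : a ∈ S)
    (u : Finset ι) (c : ι → Fin d → ℝ) (r ℓ : ι → ℝ) (lo : Fin d → ℝ) (L : ℝ) (hL : 0 < L)
    (hr : ∀ i ∈ u, 0 < r i) (hrL : ∀ i ∈ u, r i ≤ L)
    (hlo : ∀ i ∈ u, ∀ j, lo j ≤ c i j) (hhi : ∀ i ∈ u, ∀ j, c i j ≤ lo j + L)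
    (hℓ : ∀ i ∈ u, ℓ i / L ≤ (r i / (2 ^ 11 * L)) ^ S.card)
    (hsep : ∀ i ∈ u, ∀ k ∈ u, i ≠ k → c i a ≤ c k a → r k < 2 * r i →
      ∃ j ∈ S, r i ≤ |c i j - c k j|) :
    ∑ i ∈ u, ℓ i ≤ L * (6 / 2 ^ 11) ^ S.card := by
  have h := packing_bound (J := S) ⟨a, ha⟩ u (fun i j => c i j) r (fun j => lo j) L hL hr hrL
    (fun i hi j => hlo i hi j) (fun i hi j => hhi i hi j)
    (fun i hi k hk hik h1 h2 => by
      obtain ⟨j, hj, hj'⟩ := hsep i hi k hk hik h1 h2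
      exact ⟨⟨j, hj⟩, hj'⟩)
  rw [Fintype.card_coe] at h
  have h1 : ∑ i ∈ u, ℓ i ≤ ∑ i ∈ u, L * (r i ^ S.card / (2 ^ 11 * L) ^ S.card) := by
    refine Finset.sum_le_sum fun i hi => ?_
    have := hℓ i hi
    rw [div_le_iff₀ hL, div_pow] at this
    linarith
  refine h1.trans ?_
  rw [← Finset.mul_sum, ← Finset.sum_div]
  gcongr
  rw [div_le_iff₀ (by positivity), ← mul_pow]
  calc _ ≤ _ := h
    _ = _ := by congr 1; ring

/-- The root condition `2 ^ 11 * x ^ (1 / n) < y` in polynomial form. -/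
lemma le_pow_of_root_lt {x y e : ℝ} {n : ℕ} (hn : n ≠ 0) (hx : 0 ≤ x) (he : e = n)
    (h : y > 2 ^ 11 * x ^ ((1 : ℝ) / e)) : x ≤ (y / 2 ^ 11) ^ n := by
  subst he
  rw [one_div] at h
  calc x = (x ^ ((n : ℝ)⁻¹)) ^ n := (Real.rpow_inv_natCast_pow hx hn).symm
    _ ≤ _ := by
      have : 0 ≤ x ^ ((n : ℝ)⁻¹) := by positivity
      gcongr
      rw [le_div_iff₀ (by positivity)]
      linarith

/-- Two disjoint intervals, each running from `s i` in the positive direction to `x i` and clipped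
to `(b1, b2)`: the one that starts later starts no earlier than the clipped end of the other. -/
lemma le_of_disjoint_Ico {s x s' x' b1 b2 : ℝ} (hx' : s' < x') (hb : b1 ≤ s')
    (hs : s ≤ s') (h : Disjoint (Set.Ico s x ∩ Set.Ioo b1 b2) (Set.Ico s' x' ∩ Set.Ioo b1 b2)) :
    min x b2 ≤ s' := by
  by_contra! hc
  obtain ⟨p, hp1, hp2⟩ := exists_between (lt_min hc hx')
  simp only [lt_min_iff] at hp2
  have h' := Set.disjoint_left.mp h
  exact @h' p ⟨⟨by linarith, by linarith⟩, by linarith, by linarith⟩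
    ⟨⟨by linarith, by linarith⟩, by linarith, by linarith⟩

/-- The mirror image of `le_of_disjoint_Ico`. -/
lemma le_of_disjoint_Ico' {s x s' x' b1 b2 : ℝ} (hx' : x' < s') (hb : s' ≤ b2)
    (hs : s' ≤ s) (h : Disjoint (Set.Ico x s ∩ Set.Ioo b1 b2) (Set.Ico x' s' ∩ Set.Ioo b1 b2)) :
    s' ≤ max x b1 := by
  by_contra! hc
  obtain ⟨p, hp1, hp2⟩ := exists_between (max_lt hc hx')
  simp only [max_lt_iff] at hp1
  have h' := Set.disjoint_left.mp h
  exact @h' p ⟨⟨by linarith, by linarith⟩, by linarith, by linarith⟩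
    ⟨⟨by linarith, by linarith⟩, by linarith, by linarith⟩

/-- A finite sum of nonnegative terms is at most the sum over classes that cover the index set. -/
lemma sum_le_sum_classes {ι G : Type*} [Fintype G] (u : Finset ι) (P : G → ι → Prop)
    [∀ g, DecidablePred (P g)] (ℓ : ι → ℝ) (hℓ : ∀ i ∈ u, 0 ≤ ℓ i) (hP : ∀ i ∈ u, ∃ g, P g i) :
    ∑ i ∈ u, ℓ i ≤ ∑ g, ∑ i ∈ u with P g i, ℓ i := by
  simp only [Finset.sum_filter]
  rw [Finset.sum_comm]
  refine Finset.sum_le_sum fun i hi => ?_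
  obtain ⟨g, hg⟩ := hP i hi
  calc ℓ i = if P g i then ℓ i else 0 := by simp [hg]
    _ ≤ _ := Finset.single_le_sum (f := fun g => if P g i then ℓ i else 0)
      (fun g _ => by split_ifs; exacts [hℓ i hi, le_rfl]) (Finset.mem_univ g)

/-- Summing the bounds over two directions, the untyped class and the `2 * d` typed classes. -/
lemma numeric_bound {d : ℕ} (hd : 2 ≤ d) :
    6 * (2 * ((6 / 2 ^ 11 : ℝ) ^ d + 2 * d * (6 / 2 ^ 11) ^ (d - 1))) ≤ 1 / 4 := by
  obtain ⟨n, rfl⟩ : ∃ n, d = n + 2 := ⟨d - 2, by omega⟩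
  have h1 : (n : ℝ) + 2 ≤ 2 * 2 ^ n := by
    have : n + 1 ≤ 2 ^ n := Nat.lt_two_pow_self
    have : (n : ℝ) + 1 ≤ 2 ^ n := by exact_mod_cast this
    have : (1 : ℝ) ≤ 2 ^ n := one_le_pow₀ (by norm_num)
    linarith
  have h2 : (6 / 2 ^ 11 : ℝ) ^ n ≤ (1 / 2) ^ n :=
    pow_le_pow_left₀ (by norm_num) (by norm_num) n
  have h3 : ((1 : ℝ) / 2) ^ n * 2 ^ n = 1 := by rw [← mul_pow]; norm_num
  have h4 : ((1 : ℝ) / 2) ^ n ≤ 1 := pow_le_one₀ (by norm_num) (by norm_num)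
  have h5 : ((n : ℝ) + 2) * (6 / 2 ^ 11 : ℝ) ^ n ≤ 2 := by
    calc _ ≤ (2 * 2 ^ n) * ((1 : ℝ) / 2) ^ n := by gcongr
      _ = 2 := by linear_combination 2 * h3
  have e : n + 2 - 1 = n + 1 := by omega
  rw [e]
  push_cast
  calc _ = 12 * (6 / 2 ^ 11 : ℝ) ^ 2 * (6 / 2 ^ 11 : ℝ) ^ n
        + 24 * (6 / 2 ^ 11) * (((n : ℝ) + 2) * (6 / 2 ^ 11 : ℝ) ^ n) := by ring
    _ ≤ 12 * (6 / 2 ^ 11 : ℝ) ^ 2 * 1 + 24 * (6 / 2 ^ 11) * 2 := by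
      gcongr
      exact h2.trans h4
    _ ≤ _ := by norm_num

/-- Lemma (volume bound on the union of forbidden intervals): in the setting of
a valid subproblem in `d ≥ 2` dimensions (points of `ℝ^d` are modeled as
`Fin d → ℝ` with the sup-norm), with boundaries `b1 j = min_{y ∈ Y} y j`,
`b2 j = max_{y ∈ Y} y j`, diameter `L = max_j (b2 j − b1 j)` attained at the
cutting coordinate `jstar`, if every point `x` of the finite set `T` has an
assigned centroid `σ x ∈ Y`, a length `ℓ x` with `‖x − σ x‖_∞ ≤ ℓ x ≤ L/16`,
a type `t x : Fin d → Fin 3` with `‖t x‖₀ ≤ 1`, `t x jstar = 0` and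
`x jstar ≠ σ x jstar`, satisfying the boundary-closeness conditions, and if
moreover `q x / L > 2^11 · (ℓ x / L)^(1/(d − ‖t x‖₀))` for all `x ∈ T`, then
the union of the intervals `W x` has Lebesgue measure at most `L/4`. -/
theorem volume_of_union_Wx
    (d : ℕ) (hd : 2 ≤ d) (jstar : Fin d)
    (Y : Finset (Fin d → ℝ)) (hY : Y.Nonempty)
    (b1 b2 : Fin d → ℝ)
    (hb1 : ∀ j, b1 j = Y.inf' hY (fun y => y j))
    (hb2 : ∀ j, b2 j = Y.sup' hY (fun y => y j))
    (L : ℝ) (hL : 0 < L)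
    (hLmax : ∀ j, b2 j - b1 j ≤ L)
    (hLj : b2 jstar - b1 jstar = L)
    (T : Finset (Fin d → ℝ))
    (σ : (Fin d → ℝ) → (Fin d → ℝ)) (hσ : ∀ x ∈ T, σ x ∈ Y)
    (ℓ : (Fin d → ℝ) → ℝ)
    (t : (Fin d → ℝ) → Fin d → Fin 3)
    (hxσ : ∀ x ∈ T, ‖x - σ x‖ ≤ ℓ x)
    (hℓL : ∀ x ∈ T, ℓ x ≤ L / 16)
    (ht0 : ∀ x ∈ T, (Finset.univ.filter fun j => t x j ≠ 0).card ≤ 1)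
    (htj : ∀ x ∈ T, t x jstar = 0)
    (hne : ∀ x ∈ T, x jstar ≠ σ x jstar)
    (ht1 : ∀ x ∈ T, ∀ j, t x j = 1 → |x j - b1 j| ≤ ℓ x)
    (ht2 : ∀ x ∈ T, ∀ j, t x j = 2 → |x j - b2 j| ≤ ℓ x)
    (q : (Fin d → ℝ) → ℝ)
    (hq : ∀ x ∈ T, q x = sInf ((fun y => ‖σ x - y‖) ''
      {y | y ∈ Y ∧
        (if σ x jstar ≤ x jstar then min (x jstar) (b2 jstar) ≤ y jstar
          else y jstar ≤ max (x jstar) (b1 jstar))}))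
    (hqbig : ∀ x ∈ T, q x / L >
      2 ^ 11 * (ℓ x / L) ^
        ((1 : ℝ) / ((d : ℝ) - ((Finset.univ.filter fun j => t x j ≠ 0).card : ℝ))))
    (W : (Fin d → ℝ) → Set ℝ)
    (hW : ∀ x ∈ T, W x =
      (if σ x jstar ≤ x jstar then Set.Ico (σ x jstar) (x jstar)
        else Set.Ico (x jstar) (σ x jstar)) ∩ Set.Ioo (b1 jstar) (b2 jstar)) :
    volume (⋃ x ∈ T, W x) ≤ ENNReal.ofReal (L / 4) := by
  classical
  have hbY : ∀ y ∈ Y, ∀ j, b1 j ≤ y j ∧ y j ≤ b2 j := by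
    intro y hy j
    rw [hb1, hb2]
    exact ⟨Finset.inf'_le (fun y : Fin d → ℝ => y j) hy,
      Finset.le_sup' (fun y : Fin d → ℝ => y j) hy⟩
  have hℓ0 : ∀ x ∈ T, 0 ≤ ℓ x := fun x hx => (norm_nonneg _).trans (hxσ x hx)
  have hco : ∀ x ∈ T, ∀ j, |x j - σ x j| ≤ ℓ x := fun x hx j =>
    (norm_le_pi_norm (x - σ x) j).trans (hxσ x hx)
  have hq_le : ∀ x ∈ T, ∀ y ∈ Y, (if σ x jstar ≤ x jstar then min (x jstar) (b2 jstar) ≤ y jstar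
      else y jstar ≤ max (x jstar) (b1 jstar)) → q x ≤ ‖σ x - y‖ := by
    intro x hx y hy h
    rw [hq x hx]
    refine csInf_le ⟨0, ?_⟩ ⟨y, ⟨hy, h⟩, rfl⟩
    rintro _ ⟨z, -, rfl⟩
    exact norm_nonneg _
  have hqL : ∀ x ∈ T, q x ≤ L := by
    intro x hx
    obtain ⟨y, hy, hyx⟩ : ∃ y ∈ Y,
        (if σ x jstar ≤ x jstar then min (x jstar) (b2 jstar) ≤ y jstar
          else y jstar ≤ max (x jstar) (b1 jstar)) := by
      split_ifs
      · obtain ⟨y, hy, h⟩ := Finset.exists_mem_eq_sup' hY (fun y : Fin d → ℝ => y jstar)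
        exact ⟨y, hy, by rw [hb2, h]; exact min_le_right _ _⟩
      · obtain ⟨y, hy, h⟩ := Finset.exists_mem_eq_inf' hY (fun y : Fin d → ℝ => y jstar)
        exact ⟨y, hy, by rw [hb1, h]; exact le_max_right _ _⟩
    refine (hq_le x hx y hy hyx).trans ((pi_norm_le_iff_of_nonneg hL.le).2 fun j => ?_)
    have h1 := hbY _ (hσ x hx) j
    have h2 := hbY y hy j
    have h3 := hLmax j
    rw [Real.norm_eq_abs, Pi.sub_apply, abs_le]
    constructor <;> linarith
  have hq0 : ∀ x ∈ T, 0 < q x := by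
    intro x hx
    have h1 : 0 ≤ ℓ x / L := div_nonneg (hℓ0 x hx) hL.le
    have h2 : 0 < q x / L := lt_of_le_of_lt (by positivity) (hqbig x hx)
    exact (div_pos_iff_of_pos_right hL).1 h2
  have hroot : ∀ x ∈ T, ∀ n : ℕ, n ≠ 0 →
      n + (Finset.univ.filter fun j => t x j ≠ 0).card = d →
      ℓ x / L ≤ (q x / (2 ^ 11 * L)) ^ n := by
    intro x hx n hn hnd
    have := le_pow_of_root_lt hn (div_nonneg (hℓ0 x hx) hL.le)
      (by rw [sub_eq_iff_eq_add]; exact_mod_cast hnd.symm) (hqbig x hx)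
    rwa [div_div, mul_comm L] at this
  have hℓq : ∀ x ∈ T, ℓ x ≤ q x / 2 ^ 11 := by
    intro x hx
    have hc := ht0 x hx
    have h1 := hroot x hx (d - (Finset.univ.filter fun j => t x j ≠ 0).card)
      (by omega) (by omega)
    have h2 : q x / (2 ^ 11 * L) ≤ 1 := by
      rw [div_le_one (by positivity)]
      have := hqL x hx
      linarith
    have h3 := h1.trans (pow_le_of_le_one (by have := hq0 x hx; positivity) h2 (by omega))
    rw [← div_div, div_le_div_iff_of_pos_right hL] at h3
    exact h3
  obtain ⟨v, hvT, hvd, hvc⟩ := Vitali.exists_disjoint_subfamily_covering_enlargement W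
    {x | x ∈ T ∧ (W x).Nonempty} ℓ 2 (by norm_num) (fun x hx => hℓ0 x hx.1) (L / 16)
    (fun x hx => hℓL x hx.1) (fun x hx => hx.2)
  set u : Finset (Fin d → ℝ) := T.filter (· ∈ v) with hu
  have huT : ∀ x ∈ u, x ∈ T := fun x hx => (Finset.mem_filter.1 hx).1
  have hud : ∀ x ∈ u, ∀ y ∈ u, x ≠ y → Disjoint (W x) (W y) := fun x hx y hy hxy =>
    hvd (Finset.mem_filter.1 hx).2 (Finset.mem_filter.1 hy).2 hxy
  have hWs : ∀ x ∈ T, ∀ p ∈ W x, |p - σ x jstar| ≤ ℓ x ∧ |p - x jstar| ≤ ℓ x := by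
    intro x hx p hp
    rw [hW x hx] at hp
    have h1 := abs_le.1 (hco x hx jstar)
    have hp := hp.1
    rw [abs_le, abs_le]
    split_ifs at hp <;> obtain ⟨hp1, hp2⟩ := hp <;>
      refine ⟨⟨?_, ?_⟩, ?_, ?_⟩ <;> linarith
  have hWd : ∀ x ∈ T, ∀ p ∈ W x, ∀ p' ∈ W x, |p - p'| ≤ ℓ x := by
    intro x hx p hp p' hp'
    rw [hW x hx] at hp hp'
    have h1 := abs_le.1 (hco x hx jstar)
    have hp := hp.1
    have hp' := hp'.1
    rw [abs_le]
    split_ifs at hp hp' <;> obtain ⟨hp1, hp2⟩ := hp <;> obtain ⟨hp3, hp4⟩ := hp' <;>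
      constructor <;> linarith
  have hcover : (⋃ x ∈ T, W x) ⊆
      ⋃ x ∈ u, Set.Icc (σ x jstar - 3 * ℓ x) (σ x jstar + 3 * ℓ x) := by
    intro p hp
    simp only [Set.mem_iUnion] at hp ⊢
    obtain ⟨x, hx, hp⟩ := hp
    obtain ⟨y, hy, ⟨z, hzx, hzy⟩, hxy⟩ := hvc x ⟨hx, p, hp⟩
    have hyT : y ∈ T := (hvT hy).1
    refine ⟨y, Finset.mem_filter.2 ⟨hyT, hy⟩, ?_⟩
    have h1 := abs_le.1 (hWd x hx p hp z hzx)
    have h2 := abs_le.1 (hWs y hyT z hzy).1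
    constructor <;> linarith
  have hvol : volume (⋃ x ∈ T, W x) ≤ ENNReal.ofReal (6 * ∑ x ∈ u, ℓ x) := by
    refine (measure_mono hcover).trans ((measure_biUnion_finset_le _ _).trans ?_)
    rw [Finset.mul_sum, ENNReal.ofReal_sum_of_nonneg
      (fun x hx => by have := hℓ0 x (huT x hx); positivity)]
    refine Finset.sum_le_sum fun x hx => ?_
    rw [Real.volume_Icc]
    exact ENNReal.ofReal_le_ofReal (by linarith)
  refine hvol.trans (ENNReal.ofReal_le_ofReal ?_)
  -- One group for each direction (`true`: the interval runs from the centroid upwards) and each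
  -- choice of no coordinate or of a coordinate together with the face it is close to.
  let Q : Option (Fin d × Bool) → (Fin d → ℝ) → Prop := fun o x => match o with
    | none => (Finset.univ.filter fun j => t x j ≠ 0).card = 0
    | some (j, w) => t x j = if w then 1 else 2
  let P : Bool × Option (Fin d × Bool) → (Fin d → ℝ) → Prop := fun g x =>
    (σ x jstar ≤ x jstar ↔ g.1 = true) ∧ Q g.2 x
  -- A single decidability instance, so that all filtered sums over `P g` agree syntactically.
  let _ : ∀ g x, Decidable (P g x) := fun _ _ => Classical.propDecidable _
  have hcls : ∀ x ∈ u, ∃ g, P g x := by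
    intro x hx
    obtain ⟨o, ho⟩ : ∃ o, Q o x := by
      by_cases h0 : (Finset.univ.filter fun j => t x j ≠ 0).card = 0
      · exact ⟨none, h0⟩
      · obtain ⟨j, hj⟩ := Finset.card_pos.1 (Nat.pos_of_ne_zero h0)
        have hj := (Finset.mem_filter.1 hj).2
        have : t x j = 1 ∨ t x j = 2 := by
          generalize t x j = m at hj
          fin_cases m <;> simp at hj ⊢
        rcases this with h | h
        · exact ⟨some (j, true), by simp [Q, h]⟩
        · exact ⟨some (j, false), by simp [Q, h]⟩
    exact ⟨(decide (σ x jstar ≤ x jstar), o), by simp, ho⟩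
  -- In each direction, a selected centroid lying further along belongs to the set that
  -- defines `q`, because the selected intervals are disjoint.
  have hdir : ∀ b : Bool, ∃ s : ℝ, |s| = 1 ∧ (∃ lo : Fin d → ℝ, ∀ y ∈ Y, ∀ j,
      lo j ≤ s * y j ∧ s * y j ≤ lo j + L) ∧
      ∀ x ∈ u, ∀ y ∈ u, (σ x jstar ≤ x jstar ↔ b = true) → (σ y jstar ≤ y jstar ↔ b = true) →
        x ≠ y → s * σ x jstar ≤ s * σ y jstar → q x ≤ ‖σ x - σ y‖ := by
    intro b
    cases b
    · refine ⟨-1, by simp, ⟨fun j => - b2 j, fun y hy j => ?_⟩, ?_⟩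
      · have h1 := hbY y hy j
        have h2 := hLmax j
        constructor <;> linarith
      · intro x hx y hy hbx hby hxy hle
        simp only [Bool.false_eq_true, iff_false] at hbx hby
        have hd := hud x hx y hy hxy
        rw [hW x (huT x hx), hW y (huT y hy), if_neg hbx, if_neg hby] at hd
        refine hq_le x (huT x hx) _ (hσ y (huT y hy)) ?_
        rw [if_neg hbx]
        exact le_of_disjoint_Ico' (not_le.1 hby) (hbY _ (hσ y (huT y hy)) jstar).2
          (by linarith) hd
    · refine ⟨1, by simp, ⟨b1, fun y hy j => ?_⟩, ?_⟩
      · have h1 := hbY y hy j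
        have h2 := hLmax j
        constructor <;> linarith
      · intro x hx y hy hbx hby hxy hle
        simp only [iff_true] at hbx hby
        have hd := hud x hx y hy hxy
        rw [hW x (huT x hx), hW y (huT y hy), if_pos hbx, if_pos hby] at hd
        refine hq_le x (huT x hx) _ (hσ y (huT y hy)) ?_
        rw [if_pos hbx]
        exact le_of_disjoint_Ico (lt_of_le_of_ne hby (hne y (huT y hy)).symm)
          (hbY _ (hσ y (huT y hy)) jstar).1 (by linarith) hd
  -- Separation in the coordinates of `S` suffices once the other coordinates of two centroids
  -- with comparable `q` are known to be close.
  have hgroup : ∀ (g : Bool × Option (Fin d × Bool)) (S : Finset (Fin d)), jstar ∈ S →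
      (∀ x ∈ T, P g x → S.card + (Finset.univ.filter fun j => t x j ≠ 0).card = d) →
      (∀ x ∈ T, ∀ y ∈ T, P g x → P g y → q y < 2 * q x → ∀ j, j ∉ S →
        |σ x j - σ y j| < q x) →
      ∑ x ∈ u with P g x, ℓ x ≤ L * (6 / 2 ^ 11) ^ S.card := by
    intro g S hS hcard hout
    obtain ⟨s, hs, ⟨lo, hlo⟩, hsep⟩ := hdir g.1
    have hm : ∀ x ∈ u.filter (P g), x ∈ u ∧ x ∈ T ∧ P g x := fun x hx =>
      ⟨(Finset.mem_filter.1 hx).1, huT x (Finset.mem_filter.1 hx).1, (Finset.mem_filter.1 hx).2⟩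
    refine group_bound S jstar hS _ (fun x j => s * σ x j) q ℓ lo L hL
      (fun x hx => hq0 x (hm x hx).2.1) (fun x hx => hqL x (hm x hx).2.1)
      (fun x hx j => (hlo _ (hσ x (hm x hx).2.1) j).1)
      (fun x hx j => (hlo _ (hσ x (hm x hx).2.1) j).2)
      (fun x hx => hroot x (hm x hx).2.1 _ (Finset.card_ne_zero_of_mem hS)
        (hcard x (hm x hx).2.1 (hm x hx).2.2)) ?_
    intro x hx y hy hxy hle hlt
    obtain ⟨hxu, hxT, hxP⟩ := hm x hx
    obtain ⟨hyu, hyT, hyP⟩ := hm y hy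
    have h1 := hsep x hxu y hyu hxP.1 hyP.1 hxy hle
    by_contra! hcon
    refine absurd h1 (not_le.2 ((pi_norm_lt_iff (hq0 x hxT)).2 fun j => ?_))
    by_cases hj : j ∈ S
    · have := hcon j hj
      rwa [← mul_sub, abs_mul, hs, one_mul] at this
    · exact hout x hxT y hyT hxP hyP hlt j hj
  have hnone : ∀ b, ∑ x ∈ u with P (b, none) x, ℓ x ≤ L * (6 / 2 ^ 11) ^ d := by
    intro b
    have := hgroup (b, none) Finset.univ (Finset.mem_univ _)
      (fun x hx hP => by
        have h0 : (Finset.univ.filter fun j => t x j ≠ 0).card = 0 := hP.2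
        rw [h0, Finset.card_univ, Fintype.card_fin, add_zero])
      (fun x _ y _ _ _ _ j hj => absurd (Finset.mem_univ j) hj)
    simpa using this
  have hsome : ∀ b i w, ∑ x ∈ u with P (b, some (i, w)) x, ℓ x ≤
      L * (6 / 2 ^ 11) ^ (d - 1) := by
    intro b i w
    have hPt : ∀ x, P (b, some (i, w)) x → t x i = if w then 1 else 2 := fun x hP => hP.2
    have hPne : ∀ x, P (b, some (i, w)) x → t x i ≠ 0 := by
      intro x hP
      rw [hPt x hP]
      cases w <;> simp
    by_cases hi : i = jstar
    · rw [Finset.filter_false_of_mem]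
      · rw [Finset.sum_empty]; positivity
      · intro x hx hP
        exact hPne x hP (hi ▸ htj x (huT x hx))
    have hcd : (Finset.univ.erase i).card = d - 1 := by
      rw [Finset.card_erase_of_mem (Finset.mem_univ i), Finset.card_univ, Fintype.card_fin]
    have hface : ∀ x ∈ T, P (b, some (i, w)) x →
        |x i - if w then b1 i else b2 i| ≤ ℓ x := by
      intro x hx hP
      have := hPt x hP
      cases w
      · exact ht2 x hx i this
      · exact ht1 x hx i this
    have := hgroup (b, some (i, w)) (Finset.univ.erase i) (by simpa using Ne.symm hi)
      (fun x hx hP => by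
        have h1 : 0 < (Finset.univ.filter fun j => t x j ≠ 0).card :=
          Finset.card_pos.2 ⟨i, by simpa using hPne x hP⟩
        have h2 := ht0 x hx
        omega)
      (fun x hx y hy hPx hPy hlt j hj => by
        obtain rfl : j = i := by simpa using hj
        have h1 := abs_le.1 (hface x hx hPx)
        have h2 := abs_le.1 (hface y hy hPy)
        have h3 := abs_le.1 (hco x hx j)
        have h4 := abs_le.1 (hco y hy j)
        have h5 := hℓq x hx
        have h6 := hℓq y hy
        have h7 := hq0 x hx
        rw [abs_lt]
        constructor <;> linarith)
    rwa [hcd] at this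
  have hsum := sum_le_sum_classes u P ℓ (fun x hx => hℓ0 x (huT x hx)) hcls
  rw [Fintype.sum_prod_type] at hsum
  have hone : ∀ b, ∑ o, ∑ x ∈ u with P (b, o) x, ℓ x ≤
      L * ((6 / 2 ^ 11) ^ d + 2 * d * (6 / 2 ^ 11) ^ (d - 1)) := by
    intro b
    rw [Fintype.sum_option]
    have h1 := hnone b
    have h2 : ∑ o : Fin d × Bool, ∑ x ∈ u with P (b, some o) x, ℓ x ≤
        ∑ _o : Fin d × Bool, L * (6 / 2 ^ 11) ^ (d - 1) :=
      Finset.sum_le_sum fun o _ => hsome b o.1 o.2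
    simp only [Finset.sum_const, Finset.card_univ, Fintype.card_prod, Fintype.card_fin,
      Fintype.card_bool, nsmul_eq_mul] at h2
    push_cast at h2
    linarith
  have h2 := Finset.sum_le_sum fun (b : Bool) (_ : b ∈ Finset.univ) => hone b
  rw [Finset.sum_const, Finset.card_univ, Fintype.card_bool, nsmul_eq_mul] at h2
  push_cast at h2
  have h3 := mul_le_mul_of_nonneg_left (numeric_bound hd) hL.le
  linarith
end

section
/- Let T be a finite set of points in ℝ^d, each x ∈ T equipped with an assigned centroid σ_x ∈ Y, a length ℓ_x satisfying ‖x − σ_x‖_∞ ≤ ℓ_x ≤ L/16, and a type t_x : {1,…,d} → {0,1,2} with ‖t_x‖₀ ≤ 1, t_x(j*) = 0, and x(j*) ≠ σ_x(j*), such that for every j ∈ {1,…,d}: t_x(j) = 1 implies |x(j) − b₁(j)| ≤ ℓ_x, and t_x(j) = 2 implies |x(j) − b₂(j)| ≤ ℓ_x; assume moreover that every x ∈ T satisfies q_x / L > 2^{11} · (ℓ_x / L)^{1/(d − ‖t_x‖₀)}. Then the forbidden region F = (b₁(j*), b₁(j*) + L/8] ∪ [b₂(j*) − L/8, b₂(j*))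 ∪ ⋃_{x∈T} W_x has Lebesgue measure at most L/2. -/
/-! The two end pieces contribute `L / 8` each, so the intervals `W x` have to be covered by a set
of measure `L / 4`, that is `L / 8` for each of the two orientations (`σ x` left or right of `x`
in direction `j*`); reflecting all centroids, `p = -σ`, exchanges the two.

If the closed intervals of `x` and `x'`, of the same orientation, are disjoint and `σ x` comes
first, then `σ x'` is one of the centroids over which `q x` is a minimum, so
`q x ≤ ‖σ x - σ x'‖`. This holds only for the earlier point of a pair, hence balls of radius
proportional to `q` around the centroids may overlap. Boxes lying strictly to one side of the
centroids do not, because the box of a later point with much larger `q` starts too far away to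
meet the box of an earlier point (`packing`). A volume comparison then bounds the sum of the
`(q x / L) ^ d` over points of type `0`. A point with one nonzero type coordinate has a centroid
pinned within `2 ℓ x`, hence within `q x / 8`, of a face; dropping this coordinate gives the same
bound with exponent `d - 1`. Since `ℓ x / L` is smaller than that power of `q x / L` by a factor
`2 ^ (-11 m)`, `m` being the exponent, the constants leave room for the loss in Vitali's covering
lemma (`class_bound`) and for the number of classes (`side_bound`). -/

open MeasureTheory

/-! ### Disjoint one-sided boxes -/

/-- Packing bound at unit scale. The boxes used are thin slabs of thickness `q i / 4` lying strictly
to the right of `p i` in direction `js`, of half-width `q i / 4` in the other free directions, and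
of full unit width in the directions of `K`, where the points are pinned near `β`. If the boxes of
`i` and `j` met, with `p i js ≤ p j js`, then `q j / 4 < q i / 2` along `js`, and hence
`‖p i - p j‖ < q i`, against the separation hypothesis. So the boxes are disjoint, and all of them
lie in a cube of side `2`. -/
theorem packing {ι : Type*} {d : ℕ} (js : Fin d) (K : Finset (Fin d)) (hK : js ∉ K)
    (b β : Fin d → ℝ) (S : Finset ι) (p : ι → Fin d → ℝ) (q : ι → ℝ)
    (hp : ∀ i ∈ S, ∀ k, b k ≤ p i k ∧ p i k ≤ b k + 1)
    (hq : ∀ i ∈ S, 0 < q i ∧ q i ≤ 1)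
    (hβ : ∀ i ∈ S, ∀ k ∈ K, |p i k - β k| ≤ q i / 8)
    (hsep : ∀ i ∈ S, ∀ j ∈ S, i ≠ j → p i js ≤ p j js → q i ≤ ‖p i - p j‖) :
    ∑ i ∈ S, q i ^ (Kᶜ).card ≤ 2 ^ (d + (Kᶜ).card + 1) := by
  classical
  set m := (Kᶜ).card with hm
  let A : ι → Set (Fin d → ℝ) := fun i => Set.pi Set.univ fun k =>
    if k = js then Set.Ioo (p i k + q i / 4) (p i k + q i / 2)
    else if k ∈ K then Set.Icc (b k) (b k + 1)
    else Set.Icc (p i k - q i / 4) (p i k + q i / 4)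
  have hAmeas : ∀ i ∈ S, MeasurableSet (A i) := by
    intro i _
    refine MeasurableSet.univ_pi fun k => ?_
    split_ifs
    exacts [measurableSet_Ioo, measurableSet_Icc, measurableSet_Icc]
  have hAvol : ∀ i ∈ S, volume (A i) = ENNReal.ofReal (1 / 2 * (q i / 2) ^ m) := by
    intro i hi
    have hqi := (hq i hi).1
    have h1 : ∀ k, volume (if k = js then Set.Ioo (p i k + q i / 4) (p i k + q i / 2)
        else if k ∈ K then Set.Icc (b k) (b k + 1)
        else Set.Icc (p i k - q i / 4) (p i k + q i / 4))
        = ENNReal.ofReal ((if k = js then 1 / 2 else 1) * (if k ∈ K then 1 else q i / 2)) := by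
      intro k
      by_cases hk : k = js
      · subst hk
        simp only [if_true, hK, if_false, Real.volume_Ioo]
        congr 1; ring
      · by_cases hk2 : k ∈ K
        · simp [hk, hk2]
        · simp only [hk, hk2, if_false, Real.volume_Icc]
          congr 1; ring
    simp only [A]
    rw [volume_pi_pi]
    simp only [h1]
    rw [← ENNReal.ofReal_prod_of_nonneg]
    · congr 1
      rw [Finset.prod_mul_distrib]
      congr 1
      · simp
      · rw [Finset.prod_ite]
        simp only [Finset.prod_const_one, one_mul, Finset.prod_const]
        congr 2
        ext k; simp
    · intro k _
      split_ifs <;> positivity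
  have key : ∀ i ∈ S, ∀ j ∈ S, i ≠ j → p i js ≤ p j js → Disjoint (A i) (A j) := by
    intro i hi j hj hij hle
    rw [Set.disjoint_left]
    intro z hzi hzj
    have hs := hsep i hi j hj hij hle
    have hqi := (hq i hi).1
    have hqj := (hq j hj).1
    have hzi' : ∀ k, _ := fun k => hzi k (Set.mem_univ k)
    have hzj' : ∀ k, _ := fun k => hzj k (Set.mem_univ k)
    have h1 := hzi' js
    have h2 := hzj' js
    simp only [if_true, Set.mem_Ioo] at h1 h2
    have : ‖p i - p j‖ < q i := by
      rw [pi_norm_lt_iff hqi]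
      intro k
      rw [Pi.sub_apply, Real.norm_eq_abs, abs_lt]
      by_cases hk : k = js
      · subst hk
        constructor <;> linarith
      · by_cases hk2 : k ∈ K
        · have h3 := abs_le.1 (hβ i hi k hk2)
          have h4 := abs_le.1 (hβ j hj k hk2)
          constructor <;> linarith
        · have h3 := hzi' k
          have h4 := hzj' k
          simp only [hk, hk2, if_false, Set.mem_Icc] at h3 h4
          constructor <;> linarith
    linarith
  have hdisj : Set.PairwiseDisjoint (↑S : Set ι) A := by
    intro i hi j hj hij
    rcases le_total (p i js) (p j js) with h | h
    · exact key i hi j hj hij h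
    · exact (key j hj i hi hij.symm h).symm
  have hsub : (⋃ i ∈ S, A i) ⊆
      Set.pi Set.univ fun k => Set.Icc (b k - 1 / 2) (b k + 3 / 2) := by
    intro z hz
    simp only [Set.mem_iUnion] at hz
    obtain ⟨i, hi, hz⟩ := hz
    intro k _
    have h1 := hz k (Set.mem_univ k)
    have h2 := hp i hi k
    have h3 := hq i hi
    simp only at h1
    split_ifs at h1 <;> obtain ⟨h4, h5⟩ := h1 <;> constructor <;> linarith
  have hvol := measure_mono (μ := volume) hsub
  rw [measure_biUnion_finset hdisj hAmeas, Finset.sum_congr rfl hAvol, volume_pi_pi] at hvol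
  have h2 : ∀ k, volume (Set.Icc (b k - 1 / 2) (b k + 3 / 2)) = ENNReal.ofReal 2 := by
    intro k
    rw [Real.volume_Icc]; congr 1; ring
  simp only [h2, Finset.prod_const, Finset.card_univ, Fintype.card_fin] at hvol
  rw [← ENNReal.ofReal_pow (by norm_num), ← ENNReal.ofReal_sum_of_nonneg,
    ENNReal.ofReal_le_ofReal_iff (by positivity)] at hvol
  · have h3 : ∑ i ∈ S, 1 / 2 * (q i / 2) ^ m = (∑ i ∈ S, q i ^ m) / 2 ^ (m + 1) := by
      rw [Finset.sum_div]
      refine Finset.sum_congr rfl fun i _ => ?_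
      rw [div_pow, pow_succ]; field_simp
    rw [h3, div_le_iff₀ (by positivity)] at hvol
    rw [add_assoc, pow_add]
    exact hvol
  · intro i hi
    have := (hq i hi).1
    positivity

/-! ### Lengths of covering intervals -/

/-- Length bound for one class of points, all pinned in the same set `K` of coordinates: after
passing to a disjoint subfamily (Vitali, at the cost of a factor `5`), the separation hypothesis
applies to every pair, and `packing` bounds the sum of the `(q i / L) ^ |Kᶜ|`, which dominates the
sum of the lengths `ℓ i`. -/
theorem class_bound {ι : Type*} {d : ℕ} (js : Fin d) (K : Finset (Fin d)) (hK : js ∉ K)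
    (L : ℝ) (hL : 0 < L)
    (b β : Fin d → ℝ) (S : Finset ι) (p : ι → Fin d → ℝ) (q ℓ c r : ι → ℝ)
    (hp : ∀ i ∈ S, ∀ k, b k ≤ p i k ∧ p i k ≤ b k + L)
    (hq : ∀ i ∈ S, 0 < q i ∧ q i ≤ L)
    (hβ : ∀ i ∈ S, ∀ k ∈ K, |p i k - β k| ≤ q i / 8)
    (hr : ∀ i ∈ S, 0 ≤ r i ∧ 2 * r i ≤ ℓ i)
    (hℓ : ∀ i ∈ S, ℓ i / L ≤ (q i / L / 2 ^ 11) ^ (Kᶜ).card)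
    (hsep : ∀ i ∈ S, ∀ j ∈ S,
      Disjoint (Metric.closedBall (c i) (r i)) (Metric.closedBall (c j) (r j)) →
      p i js ≤ p j js → q i ≤ ‖p i - p j‖) :
    volume (⋃ i ∈ S, Metric.closedBall (c i) (r i)) ≤
      ENNReal.ofReal (L * (5 * 2 ^ (d + (Kᶜ).card + 1) / (2 ^ 11) ^ (Kᶜ).card)) := by
  classical
  obtain ⟨u, huS, hudisj, hucov⟩ :=
    Vitali.exists_disjoint_subfamily_covering_enlargement_closedBall
      (S : Set ι) c r (∑ i ∈ S, r i)
      (fun i hi => Finset.single_le_sum (f := r) (fun j hj => (hr j hj).1) hi) 5 (by norm_num)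
  obtain ⟨U, rfl⟩ : ∃ U : Finset ι, (U : Set ι) = u :=
    (S.finite_toSet.subset huS).exists_finset_coe
  have hUS : U ⊆ S := by exact_mod_cast huS
  have hpack := packing js K hK (fun k => b k / L) (fun k => β k / L) U
    (fun i k => p i k / L) (fun i => q i / L)
    (by
      intro i hi k
      obtain ⟨h1, h2⟩ := hp i (hUS hi) k
      refine ⟨by gcongr, ?_⟩
      rw [div_add_one hL.ne']
      gcongr)
    (by
      intro i hi
      obtain ⟨h1, h2⟩ := hq i (hUS hi)
      exact ⟨by positivity, (div_le_one hL).2 h2⟩)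
    (by
      intro i hi k hk
      have h := hβ i (hUS hi) k hk
      rw [← sub_div, abs_div, abs_of_pos hL, div_right_comm]
      gcongr)
    (by
      intro i hi j hj hij hle
      have h := hsep i (hUS hi) j (hUS hj) (hudisj hi hj hij) ((div_le_div_iff_of_pos_right hL).1 hle)
      have h2 : ((fun k => p i k / L) - fun k => p j k / L) = L⁻¹ • (p i - p j) := by
        ext k; simp [div_eq_inv_mul, mul_sub]
      rw [h2, norm_smul, Real.norm_eq_abs, abs_of_pos (inv_pos.2 hL), div_eq_inv_mul]
      gcongr)
  have hsub : (⋃ i ∈ S, Metric.closedBall (c i) (r i)) ⊆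
      ⋃ i ∈ U, Metric.closedBall (c i) (5 * r i) := by
    refine Set.iUnion₂_subset fun i hi => ?_
    obtain ⟨j, hj, hij⟩ := hucov i hi
    exact hij.trans (Set.subset_biUnion_of_mem (u := fun i => Metric.closedBall (c i) (5 * r i)) hj)
  calc volume (⋃ i ∈ S, Metric.closedBall (c i) (r i))
      ≤ ∑ i ∈ U, volume (Metric.closedBall (c i) (5 * r i)) :=
        (measure_mono hsub).trans (measure_biUnion_finset_le _ _)
    _ = ENNReal.ofReal (∑ i ∈ U, 2 * (5 * r i)) := by
        simp only [Real.volume_closedBall]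
        rw [ENNReal.ofReal_sum_of_nonneg]
        intro i hi
        have := (hr i (hUS hi)).1
        positivity
    _ ≤ _ := by
        apply ENNReal.ofReal_le_ofReal
        calc ∑ i ∈ U, 2 * (5 * r i)
            ≤ ∑ i ∈ U, L * (5 * (q i / L) ^ (Kᶜ).card / (2 ^ 11) ^ (Kᶜ).card) := by
              refine Finset.sum_le_sum fun i hi => ?_
              have h1 := (hr i (hUS hi)).2
              have h2 := hℓ i (hUS hi)
              rw [div_pow, div_le_iff₀ hL] at h2
              calc 2 * (5 * r i) ≤ 5 * ℓ i := by linarith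
                _ ≤ 5 * ((q i / L) ^ (Kᶜ).card / (2 ^ 11) ^ (Kᶜ).card * L) := by gcongr
                _ = _ := by ring
          _ = L * (5 * (∑ i ∈ U, (q i / L) ^ (Kᶜ).card) / (2 ^ 11) ^ (Kᶜ).card) := by
              rw [Finset.mul_sum, Finset.sum_div, Finset.mul_sum]
          _ ≤ _ := by gcongr

/-- Length bound for one orientation. The points split into the class of type `0` (`K = ∅`) and
the `2 (d - 1)` classes `K = {k}`, `k ≠ js`, of points pinned to one of the two faces orthogonal
to `k`; the bounds of `class_bound` sum to at most `L / 8`. -/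
theorem side_bound {ι : Type*} {d : ℕ} (hd : 2 ≤ d) (js : Fin d)
    (L : ℝ) (hL : 0 < L)
    (b : Fin d → ℝ) (β : Fin 3 → Fin d → ℝ) (S : Finset ι) (p : ι → Fin d → ℝ)
    (q ℓ c r : ι → ℝ) (t : ι → Fin d → Fin 3)
    (hp : ∀ i ∈ S, ∀ k, b k ≤ p i k ∧ p i k ≤ b k + L)
    (hq : ∀ i ∈ S, q i ≤ L)
    (ht0 : ∀ i ∈ S, (Finset.univ.filter fun j => t i j ≠ 0).card ≤ 1)
    (htj : ∀ i ∈ S, t i js = 0)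
    (hβ : ∀ i ∈ S, ∀ k, t i k ≠ 0 → |p i k - β (t i k) k| ≤ 2 * ℓ i)
    (hr : ∀ i ∈ S, 0 < r i ∧ 2 * r i ≤ ℓ i)
    (hqbig : ∀ i ∈ S, q i / L >
      2 ^ 11 * (ℓ i / L) ^
        ((1 : ℝ) / ((d : ℝ) - ((Finset.univ.filter fun j => t i j ≠ 0).card : ℝ))))
    (hsep : ∀ i ∈ S, ∀ j ∈ S,
      Disjoint (Metric.closedBall (c i) (r i)) (Metric.closedBall (c j) (r j)) →
      p i js ≤ p j js → q i ≤ ‖p i - p j‖) :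
    volume (⋃ i ∈ S, Metric.closedBall (c i) (r i)) ≤ ENNReal.ofReal (L / 8) := by
  classical
  have hq0 : ∀ i ∈ S, 0 < q i := by
    intro i hi
    have h1 := hqbig i hi
    have h2 : 0 ≤ ℓ i / L := by have := hr i hi; apply div_nonneg <;> linarith
    have h3 : 0 < q i / L := lt_of_le_of_lt (by positivity) h1
    exact (div_pos_iff_of_pos_right hL).1 h3
  have hmain : ∀ i ∈ S, ∀ m : ℕ, 1 ≤ m →
      (Finset.univ.filter fun j => t i j ≠ 0).card + m = d →
      ℓ i / L ≤ (q i / L / 2 ^ 11) ^ m ∧ 2 * ℓ i ≤ q i / 8 := by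
    intro i hi m hm hmd
    have h1 := hqbig i hi
    have h2 : 0 ≤ ℓ i / L := by have := hr i hi; apply div_nonneg <;> linarith
    have e : (d : ℝ) - ((Finset.univ.filter fun j => t i j ≠ 0).card : ℝ) = m := by
      have : (d : ℝ) = ((Finset.univ.filter fun j => t i j ≠ 0).card : ℝ) + m := by
        exact_mod_cast hmd.symm
      rw [this]; ring
    rw [e, one_div] at h1
    have h3 : (ℓ i / L) ^ ((m : ℝ)⁻¹) ≤ q i / L / 2 ^ 11 := by
      rw [le_div_iff₀ (by positivity)]; linarith
    have h4 : ℓ i / L ≤ (q i / L / 2 ^ 11) ^ m := by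
      calc ℓ i / L = ((ℓ i / L) ^ ((m : ℝ)⁻¹)) ^ m :=
            (Real.rpow_inv_natCast_pow h2 (by omega)).symm
        _ ≤ _ := by gcongr
    refine ⟨h4, ?_⟩
    have h5 : q i / L ≤ 1 := (div_le_one hL).2 (hq i hi)
    have h6 : 0 < q i / L := div_pos (hq0 i hi) hL
    have h7 : (q i / L / 2 ^ 11) ^ m ≤ q i / L / 2 ^ 11 :=
      pow_le_of_le_one (by positivity) (by linarith) (by omega)
    have h8 := h4.trans h7
    rw [div_right_comm, div_le_div_iff_of_pos_right hL] at h8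
    have := hq0 i hi
    linarith
  let S0 := S.filter fun i => (Finset.univ.filter fun j => t i j ≠ 0).card = 0
  let S1 : Fin d → Fin 3 → Finset ι := fun k a => S.filter fun i => t i k = a ∧
    (Finset.univ.filter fun j => t i j ≠ 0).card = 1
  let V : Finset ι → Set ℝ := fun S => ⋃ i ∈ S, Metric.closedBall (c i) (r i)
  have hcover : V S ⊆ V S0 ∪ ⋃ k ∈ Finset.univ.erase js, (V (S1 k 1) ∪ V (S1 k 2)) := by
    refine Set.iUnion₂_subset fun i hi z hz => ?_
    rcases Nat.le_one_iff_eq_zero_or_eq_one.1 (ht0 i hi) with h | h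
    · left
      exact Set.mem_biUnion (show i ∈ S0 from Finset.mem_filter.2 ⟨hi, h⟩) hz
    · right
      obtain ⟨k, hk⟩ := Finset.card_pos.1 (by omega :
        0 < (Finset.univ.filter fun j => t i j ≠ 0).card)
      have hk0 : t i k ≠ 0 := (Finset.mem_filter.1 hk).2
      have hkj : k ≠ js := by rintro rfl; exact hk0 (htj i hi)
      refine Set.mem_biUnion (Finset.mem_erase.2 ⟨hkj, Finset.mem_univ k⟩) ?_
      have : t i k = 1 ∨ t i k = 2 := by
        generalize t i k = a at hk0; revert hk0; revert a; decide
      rcases this with h' | h'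
      · left
        exact Set.mem_biUnion (show i ∈ S1 k 1 from Finset.mem_filter.2 ⟨hi, h', h⟩) hz
      · right
        exact Set.mem_biUnion (show i ∈ S1 k 2 from Finset.mem_filter.2 ⟨hi, h', h⟩) hz
  have hS0 : volume (V S0) ≤
      ENNReal.ofReal (L * (5 * 2 ^ (d + d + 1) / (2 ^ 11) ^ d)) := by
    have hsub : ∀ i ∈ S0, i ∈ S := fun i hi => (Finset.mem_filter.1 hi).1
    have hc : ((∅ : Finset (Fin d))ᶜ).card = d := by simp
    have := class_bound js ∅ (by simp) L hL b 0 S0 p q ℓ c r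
      (fun i hi => hp i (hsub i hi)) (fun i hi => ⟨hq0 i (hsub i hi), hq i (hsub i hi)⟩)
      (by simp) (fun i hi => ⟨(hr i (hsub i hi)).1.le, (hr i (hsub i hi)).2⟩)
      (fun i hi => by
        rw [hc]
        exact (hmain i (hsub i hi) d (by omega) (by
          rw [(Finset.mem_filter.1 hi).2, zero_add])).1)
      (fun i hi j hj => hsep i (hsub i hi) j (hsub j hj))
    rwa [hc] at this
  have hS1 : ∀ k ≠ js, ∀ a : Fin 3, a ≠ 0 → volume (V (S1 k a)) ≤
      ENNReal.ofReal (L * (5 * 2 ^ (d + (d - 1) + 1) / (2 ^ 11) ^ (d - 1))) := by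
    intro k hk a ha
    have hsub : ∀ i ∈ S1 k a, i ∈ S := fun i hi => (Finset.mem_filter.1 hi).1
    have hc : (({k} : Finset (Fin d))ᶜ).card = d - 1 := by
      rw [Finset.card_compl]; simp
    have hm := fun i hi => hmain i (hsub i hi) (d - 1) (by omega) (by
          rw [(Finset.mem_filter.1 hi).2.2]; omega)
    have := class_bound js {k} (by simpa using hk.symm) L hL b (β a) (S1 k a) p q ℓ c r
      (fun i hi => hp i (hsub i hi)) (fun i hi => ⟨hq0 i (hsub i hi), hq i (hsub i hi)⟩)
      (fun i hi k' hk' => by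
        rw [Finset.mem_singleton] at hk'
        subst hk'
        have hta : t i k' = a := (Finset.mem_filter.1 hi).2.1
        have h := hβ i (hsub i hi) k' (hta ▸ ha)
        rw [hta] at h
        exact h.trans (hm i hi).2)
      (fun i hi => ⟨(hr i (hsub i hi)).1.le, (hr i (hsub i hi)).2⟩)
      (fun i hi => by rw [hc]; exact (hm i hi).1)
      (fun i hi j hj => hsep i (hsub i hi) j (hsub j hj))
    rwa [hc] at this
  set B0 := L * (5 * 2 ^ (d + d + 1) / (2 ^ 11) ^ d) with hB0
  set B1 := L * (5 * 2 ^ (d + (d - 1) + 1) / (2 ^ 11) ^ (d - 1)) with hB1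
  have hB0n : 0 ≤ B0 := by positivity
  have hB1n : 0 ≤ B1 := by positivity
  calc volume (V S)
      ≤ volume (V S0) + ∑ k ∈ Finset.univ.erase js, (volume (V (S1 k 1)) + volume (V (S1 k 2))) := by
        refine (measure_mono hcover).trans ((measure_union_le _ _).trans ?_)
        gcongr
        refine (measure_biUnion_finset_le _ _).trans ?_
        gcongr
        exact measure_union_le _ _
    _ ≤ ENNReal.ofReal B0 + ∑ k ∈ Finset.univ.erase js, (ENNReal.ofReal B1 + ENNReal.ofReal B1) := by
        gcongr with k hk
        · exact hS1 k (Finset.ne_of_mem_erase hk) 1 (by decide)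
        · exact hS1 k (Finset.ne_of_mem_erase hk) 2 (by decide)
    _ = ENNReal.ofReal (B0 + (d - 1 : ℕ) * (B1 + B1)) := by
        rw [Finset.sum_const, Finset.card_erase_of_mem (Finset.mem_univ _), Finset.card_univ,
          Fintype.card_fin, nsmul_eq_mul, ← ENNReal.ofReal_add hB1n hB1n,
          ← ENNReal.ofReal_natCast, ← ENNReal.ofReal_mul (by positivity),
          ← ENNReal.ofReal_add hB0n (by positivity)]
    _ ≤ ENNReal.ofReal (L / 8) := by
        apply ENNReal.ofReal_le_ofReal
        obtain ⟨m, rfl⟩ : ∃ m, d = m + 1 := ⟨d - 1, by omega⟩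
        have hm : 1 ≤ m := by omega
        rw [hB0, hB1]
        simp only [Nat.add_sub_cancel]
        have e1 : (5 * 2 ^ (m + 1 + (m + 1) + 1) / (2 ^ 11) ^ (m + 1) : ℝ)
            = 5 / 256 / 512 ^ m := by
          rw [show m + 1 + (m + 1) + 1 = 2 * m + 3 by ring, pow_add, pow_mul, pow_succ _ m,
            show (2 ^ 11 : ℝ) = 2 ^ 2 * 512 by norm_num, mul_pow]
          field_simp; norm_num
        have e2 : (5 * 2 ^ (m + 1 + m + 1) / (2 ^ 11) ^ m : ℝ) = 20 / 512 ^ m := by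
          rw [show m + 1 + m + 1 = 2 * m + 2 by ring, pow_add, pow_mul,
            show (2 ^ 11 : ℝ) = 2 ^ 2 * 512 by norm_num, mul_pow]
          field_simp; norm_num
        rw [e1, e2]
        have h2 : 2 * (m : ℝ) ≤ 2 ^ m := by
          obtain ⟨n, rfl⟩ : ∃ n, m = n + 1 := ⟨m - 1, by omega⟩
          have : (n : ℝ) + 1 ≤ 2 ^ n := by exact_mod_cast Nat.lt_two_pow_self
          rw [pow_succ]; push_cast; linarith
        have h3 : (256 : ℝ) ≤ 256 ^ m := le_self_pow₀ (by norm_num) (by omega)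
        have h4 : 256 * (2 * (m : ℝ)) ≤ 512 ^ m := by
          rw [show (512 : ℝ) = 256 * 2 by norm_num, mul_pow]
          gcongr
        have hm' : (1 : ℝ) ≤ m := by exact_mod_cast hm
        have h5 : 5 / 256 / (512 : ℝ) ^ m + m * (20 / 512 ^ m + 20 / 512 ^ m) ≤ 1 / 8 := by
          have : 5 / 256 / (512 : ℝ) ^ m + m * (20 / 512 ^ m + 20 / 512 ^ m)
            = (5 / 256 + 40 * m) / 512 ^ m := by ring
          rw [this, div_le_iff₀ (by positivity)]
          linarith
        nlinarith [mul_le_mul_of_nonneg_left h5 hL.le]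

/-! ### The forbidden region -/

/-- Lemma (volume of the forbidden region, `d = 2` analysis): in the setting of
a valid subproblem in `d ≥ 2` dimensions (points of `ℝ^d` modeled as
`Fin d → ℝ` with the sup-norm), with boundaries `b1 j = min_{y ∈ Y} y j`,
`b2 j = max_{y ∈ Y} y j` and diameter `L = max_j (b2 j − b1 j)` attained at
the cutting coordinate `jstar`, if every point `x` of the finite set `T` has
an assigned centroid `σ x ∈ Y`, a length `ℓ x` with
`‖x − σ x‖_∞ ≤ ℓ x ≤ L/16`, a type `t x : Fin d → Fin 3` with `‖t x‖₀ ≤ 1`,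
`t x jstar = 0` and `x jstar ≠ σ x jstar`, satisfying the boundary-closeness
conditions, and moreover `q x / L > 2^11 · (ℓ x / L)^(1/(d − ‖t x‖₀))` for
all `x ∈ T`, then the forbidden region
`F = (b₁(j*), b₁(j*) + L/8] ∪ [b₂(j*) − L/8, b₂(j*)) ∪ ⋃_{x∈T} W x`
has Lebesgue measure at most `L/2`. -/
theorem volume_of_forbidden_region
    (d : ℕ) (hd : 2 ≤ d) (jstar : Fin d)
    (Y : Finset (Fin d → ℝ)) (hY : Y.Nonempty)
    (b1 b2 : Fin d → ℝ)
    (hb1 : ∀ j, b1 j = Y.inf' hY (fun y => y j))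
    (hb2 : ∀ j, b2 j = Y.sup' hY (fun y => y j))
    (L : ℝ) (hL : 0 < L)
    (hLmax : ∀ j, b2 j - b1 j ≤ L)
    (hLj : b2 jstar - b1 jstar = L)
    (T : Finset (Fin d → ℝ))
    (σ : (Fin d → ℝ) → (Fin d → ℝ)) (hσ : ∀ x ∈ T, σ x ∈ Y)
    (ℓ : (Fin d → ℝ) → ℝ)
    (t : (Fin d → ℝ) → Fin d → Fin 3)
    (hxσ : ∀ x ∈ T, ‖x - σ x‖ ≤ ℓ x)
    (hℓL : ∀ x ∈ T, ℓ x ≤ L / 16)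
    (ht0 : ∀ x ∈ T, (Finset.univ.filter fun j => t x j ≠ 0).card ≤ 1)
    (htj : ∀ x ∈ T, t x jstar = 0)
    (hne : ∀ x ∈ T, x jstar ≠ σ x jstar)
    (ht1 : ∀ x ∈ T, ∀ j, t x j = 1 → |x j - b1 j| ≤ ℓ x)
    (ht2 : ∀ x ∈ T, ∀ j, t x j = 2 → |x j - b2 j| ≤ ℓ x)
    (q : (Fin d → ℝ) → ℝ)
    (hq : ∀ x ∈ T, q x = sInf ((fun y => ‖σ x - y‖) ''
      {y | y ∈ Y ∧
        (if σ x jstar ≤ x jstar then min (x jstar) (b2 jstar) ≤ y jstar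
          else y jstar ≤ max (x jstar) (b1 jstar))}))
    (hqbig : ∀ x ∈ T, q x / L >
      2 ^ 11 * (ℓ x / L) ^
        ((1 : ℝ) / ((d : ℝ) - ((Finset.univ.filter fun j => t x j ≠ 0).card : ℝ))))
    (W : (Fin d → ℝ) → Set ℝ)
    (hW : ∀ x ∈ T, W x =
      (if σ x jstar ≤ x jstar then Set.Ico (σ x jstar) (x jstar)
        else Set.Ico (x jstar) (σ x jstar)) ∩ Set.Ioo (b1 jstar) (b2 jstar))
    (F : Set ℝ)
    (hF : F = Set.Ioc (b1 jstar) (b1 jstar + L / 8) ∪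
      Set.Ico (b2 jstar - L / 8) (b2 jstar) ∪ ⋃ x ∈ T, W x) :
    volume F ≤ ENNReal.ofReal (L / 2) := by
  classical
  have hYb : ∀ y ∈ Y, ∀ k, b1 k ≤ y k ∧ y k ≤ b2 k := by
    intro y hy k
    rw [hb1, hb2]
    exact ⟨Finset.inf'_le (fun y : Fin d → ℝ => y k) hy,
      Finset.le_sup' (fun y : Fin d → ℝ => y k) hy⟩
  have hYL : ∀ y ∈ Y, ∀ y' ∈ Y, ‖y - y'‖ ≤ L := by
    intro y hy y' hy'
    rw [pi_norm_le_iff_of_nonneg hL.le]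
    intro k
    have h1 := hYb y hy k
    have h2 := hYb y' hy' k
    have h3 := hLmax k
    rw [Pi.sub_apply, Real.norm_eq_abs, abs_le]
    constructor <;> linarith
  have hqle : ∀ x ∈ T, ∀ y ∈ Y,
      (if σ x jstar ≤ x jstar then min (x jstar) (b2 jstar) ≤ y jstar
          else y jstar ≤ max (x jstar) (b1 jstar)) → q x ≤ ‖σ x - y‖ := by
    intro x hx y hy h
    rw [hq x hx]
    refine csInf_le ⟨0, ?_⟩ ⟨y, ⟨hy, h⟩, rfl⟩
    rintro _ ⟨y, -, rfl⟩
    exact norm_nonneg _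
  have hqL : ∀ x ∈ T, q x ≤ L := by
    intro x hx
    obtain ⟨y1, hy1, e1⟩ := Finset.exists_mem_eq_inf' hY (fun y : Fin d → ℝ => y jstar)
    obtain ⟨y2, hy2, e2⟩ := Finset.exists_mem_eq_sup' hY (fun y : Fin d → ℝ => y jstar)
    rw [← hb1] at e1
    rw [← hb2] at e2
    by_cases h : σ x jstar ≤ x jstar
    · refine (hqle x hx y2 hy2 ?_).trans (hYL _ (hσ x hx) _ hy2)
      rw [if_pos h, ← e2]; exact min_le_right _ _
    · refine (hqle x hx y1 hy1 ?_).trans (hYL _ (hσ x hx) _ hy1)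
      rw [if_neg h, ← e1]; exact le_max_right _ _
  have hcoord : ∀ x ∈ T, ∀ k, |x k - σ x k| ≤ ℓ x := by
    intro x hx k
    have := (norm_le_pi_norm (x - σ x) k).trans (hxσ x hx)
    rwa [Pi.sub_apply, Real.norm_eq_abs] at this
  let β : Fin 3 → Fin d → ℝ := fun a => if a = 1 then b1 else b2
  have hβ : ∀ x ∈ T, ∀ k, t x k ≠ 0 → |σ x k - β (t x k) k| ≤ 2 * ℓ x := by
    intro x hx k hk
    have h1 := abs_le.1 (hcoord x hx k)
    have : t x k = 1 ∨ t x k = 2 := by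
      generalize t x k = a at hk; revert hk; revert a; decide
    rcases this with h | h
    · have h2 := abs_le.1 (ht1 x hx k h)
      simp only [β, h, if_true]
      rw [abs_le]; constructor <;> linarith
    · have h2 := abs_le.1 (ht2 x hx k h)
      simp only [β, h, show (2 : Fin 3) ≠ 1 by decide, if_false]
      rw [abs_le]; constructor <;> linarith
  let c : (Fin d → ℝ) → ℝ := fun x => (σ x jstar + x jstar) / 2
  let r : (Fin d → ℝ) → ℝ := fun x => |x jstar - σ x jstar| / 2
  have hr : ∀ x ∈ T, 0 < r x ∧ 2 * r x ≤ ℓ x := by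
    intro x hx
    refine ⟨half_pos (abs_pos.2 (sub_ne_zero.2 (hne x hx))), ?_⟩
    have := hcoord x hx jstar
    simp only [r]; linarith
  -- The closed ball of `x` is the closed interval between `σ x` and `x` in direction `jstar`.
  have hballs : ∀ x, σ x jstar ∈ Metric.closedBall (c x) (r x) ∧
      ∀ s, min (σ x jstar) (x jstar) ≤ s → s ≤ max (σ x jstar) (x jstar) →
        s ∈ Metric.closedBall (c x) (r x) := by
    intro x
    have : ∀ s, min (σ x jstar) (x jstar) ≤ s → s ≤ max (σ x jstar) (x jstar) →
        s ∈ Metric.closedBall (c x) (r x) := by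
      intro s h1 h2
      rw [Metric.mem_closedBall, Real.dist_eq]
      simp only [c, r]
      rcases le_total (σ x jstar) (x jstar) with h | h
      · rw [min_eq_left h] at h1
        rw [max_eq_right h] at h2
        rw [abs_of_nonneg (sub_nonneg.2 h), abs_le]; constructor <;> linarith
      · rw [min_eq_right h] at h1
        rw [max_eq_left h] at h2
        rw [abs_of_nonpos (sub_nonpos.2 h), abs_le]; constructor <;> linarith
    exact ⟨this _ (min_le_left _ _) (le_max_left _ _), this⟩
  let TR := T.filter fun x => σ x jstar ≤ x jstar
  let TL := T.filter fun x => ¬ σ x jstar ≤ x jstar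
  have hTR : ∀ x ∈ TR, x ∈ T := fun x hx => (Finset.mem_filter.1 hx).1
  have hTL : ∀ x ∈ TL, x ∈ T := fun x hx => (Finset.mem_filter.1 hx).1
  have hR : volume (⋃ x ∈ TR, Metric.closedBall (c x) (r x)) ≤ ENNReal.ofReal (L / 8) := by
    refine side_bound hd jstar L hL b1 β TR σ q ℓ c r t ?_
      (fun x hx => hqL x (hTR x hx)) (fun x hx => ht0 x (hTR x hx))
      (fun x hx => htj x (hTR x hx)) (fun x hx => hβ x (hTR x hx))
      (fun x hx => hr x (hTR x hx))
      (fun x hx => hqbig x (hTR x hx)) ?_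
    · intro x hx k
      have h1 := hYb _ (hσ x (hTR x hx)) k
      have h2 := hLmax k
      exact ⟨h1.1, by linarith⟩
    · intro x hx y hy hdis hle
      have hxo := (Finset.mem_filter.1 hx).2
      refine hqle x (hTR x hx) _ (hσ y (hTR y hy)) ?_
      rw [if_pos hxo]
      refine (min_le_left _ _).trans (le_of_not_gt fun hlt => ?_)
      refine Set.disjoint_left.1 hdis ((hballs x).2 (σ y jstar) ?_ ?_) (hballs y).1
      · exact (min_le_left _ _).trans hle
      · exact hlt.le.trans (le_max_right _ _)
  have hLft : volume (⋃ x ∈ TL, Metric.closedBall (c x) (r x)) ≤ ENNReal.ofReal (L / 8) := by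
    refine side_bound hd jstar L hL (fun k => -b2 k) (fun a k => -β a k) TL
      (fun x => -σ x) q ℓ c r t ?_
      (fun x hx => hqL x (hTL x hx)) (fun x hx => ht0 x (hTL x hx))
      (fun x hx => htj x (hTL x hx)) ?_
      (fun x hx => hr x (hTL x hx))
      (fun x hx => hqbig x (hTL x hx)) ?_
    · intro x hx k
      have h1 := hYb _ (hσ x (hTL x hx)) k
      have h2 := hLmax k
      simp only [Pi.neg_apply]
      exact ⟨by linarith, by linarith⟩
    · intro x hx k hk
      have := hβ x (hTL x hx) k hk
      rwa [Pi.neg_apply, ← abs_neg, show -(-σ x k - -β (t x k) k) = σ x k - β (t x k) k by ring]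
    · intro x hx y hy hdis hle
      have hxo := (Finset.mem_filter.1 hx).2
      simp only [Pi.neg_apply, neg_le_neg_iff] at hle
      rw [show -σ x - -σ y = -(σ x - σ y) by abel, norm_neg]
      refine hqle x (hTL x hx) _ (hσ y (hTL y hy)) ?_
      rw [if_neg hxo]
      refine le_trans (le_of_not_gt fun hlt => ?_) (le_max_left _ _)
      refine Set.disjoint_left.1 hdis ((hballs x).2 (σ y jstar) ?_ ?_) (hballs y).1
      · exact (min_le_right _ _).trans hlt.le
      · exact hle.trans (le_max_left _ _)
  have hWsub : (⋃ x ∈ T, W x) ⊆ (⋃ x ∈ TR, Metric.closedBall (c x) (r x)) ∪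
      ⋃ x ∈ TL, Metric.closedBall (c x) (r x) := by
    refine Set.iUnion₂_subset fun x hx s hs => ?_
    rw [hW x hx] at hs
    by_cases h : σ x jstar ≤ x jstar
    · left
      rw [if_pos h] at hs
      refine Set.mem_biUnion (show x ∈ TR from Finset.mem_filter.2 ⟨hx, h⟩) ((hballs x).2 s ?_ ?_)
      · exact (min_le_left _ _).trans hs.1.1
      · exact hs.1.2.le.trans (le_max_right _ _)
    · right
      rw [if_neg h] at hs
      refine Set.mem_biUnion (show x ∈ TL from Finset.mem_filter.2 ⟨hx, h⟩) ((hballs x).2 s ?_ ?_)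
      · exact (min_le_right _ _).trans hs.1.1
      · exact hs.1.2.le.trans (le_max_left _ _)
  calc volume F ≤ (ENNReal.ofReal (L / 8) + ENNReal.ofReal (L / 8)) +
        (ENNReal.ofReal (L / 8) + ENNReal.ofReal (L / 8)) := by
        rw [hF]
        refine (measure_union_le _ _).trans (add_le_add ((measure_union_le _ _).trans ?_) ?_)
        · rw [Real.volume_Ioc, Real.volume_Ico]
          gcongr <;> linarith
        · exact (measure_mono hWsub).trans ((measure_union_le _ _).trans (add_le_add hR hLft))
    _ = ENNReal.ofReal (L / 2) := by
        rw [← ENNReal.ofReal_add (by positivity) (by positivity),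
          ← ENNReal.ofReal_add (by positivity) (by positivity)]
        congr 1; ring
end

section
/- Let d ≥ 1 be an integer and j* ∈ {1,…,d}. Let U be a finite set of points in ℝ^d, and for each x ∈ U let σ_x ∈ ℝ^d and q_x > 0 be given with σ_x(j*) < x(j*). Assume that the intervals [σ_x(j*), x(j*)) for x ∈ U are pairwise disjoint, and that for all distinct x, x′ ∈ U with x(j*) ≤ σ_{x′}(j*) one has q_x ≤ ‖σ_x − σ_{x′}‖_∞. Then the boxes B_x = {z ∈ ℝ^d : ‖z − σ_x‖_∞ < q_x/3 and z(j*) − σ_x(j*) > q_x/6}, for x ∈ U, are pairwise disjoint. -/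
/-!
Disjoint intervals are ordered, so for two distinct points one may assume `x jstar ≤ σ x' jstar`.
A common point `z` of the two boxes would give, by the triangle inequality,
`q x ≤ ‖σ x - σ x'‖ < q x / 3 + q x' / 3`, hence `q x' > 2 * q x`. Then `z jstar` exceeds
`σ x' jstar + q x' / 6 > σ x' jstar + q x / 3`, whereas `z jstar < σ x jstar + q x / 3`: this
contradicts `σ x jstar < σ x' jstar`. The core of the argument is `boxes_disjoint_of_lt`.
-/

/-- Two boxes with centres `s`, `t` and sizes `a`, `b` are disjoint when `s` lies strictly below `t`
in direction `j` and the size of the lower box is at most the distance of the centres. -/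
lemma boxes_disjoint_of_lt {d : ℕ} {j : Fin d} {s t : Fin d → ℝ} {a b : ℝ}
    (hst : s j < t j) (hfar : a ≤ ‖s - t‖) :
    Disjoint {z : Fin d → ℝ | ‖z - s‖ < a / 3 ∧ a / 6 < z j - s j}
      {z : Fin d → ℝ | ‖z - t‖ < b / 3 ∧ b / 6 < z j - t j} := by
  rw [Set.disjoint_left]
  rintro z ⟨hzs, -⟩ ⟨hzt, hzt'⟩
  have htri : ‖s - t‖ ≤ ‖z - s‖ + ‖z - t‖ := by
    rw [norm_sub_rev z s]
    exact norm_sub_le_norm_sub_add_norm_sub s z t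
  have hcoord : z j - s j ≤ ‖z - s‖ := (le_abs_self _).trans (norm_le_pi_norm (z - s) j)
  linarith

/-- Lemma (disjointness of the boxes `B_x`): let `U` be a finite set of points
of `ℝ^d` (modeled as `Fin d → ℝ` with the sup-norm), each `x ∈ U` equipped
with `σ x ∈ ℝ^d` and `q x > 0` such that `σ x jstar < x jstar`.  If the
intervals `[σ x jstar, x jstar)` are pairwise disjoint and for all distinct
`x, x' ∈ U` with `x jstar ≤ σ x' jstar` one has `q x ≤ ‖σ x − σ x'‖_∞`, then
the boxes `B x = {z : ‖z − σ x‖_∞ < q x / 3 ∧ z jstar − σ x jstar > q x / 6}`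
are pairwise disjoint. -/
theorem boxes_pairwise_disjoint
    (d : ℕ) (hd : 1 ≤ d) (jstar : Fin d)
    (U : Finset (Fin d → ℝ))
    (σ : (Fin d → ℝ) → (Fin d → ℝ))
    (q : (Fin d → ℝ) → ℝ)
    (hq : ∀ x ∈ U, 0 < q x)
    (hlt : ∀ x ∈ U, σ x jstar < x jstar)
    (hdisj : ∀ x ∈ U, ∀ x' ∈ U, x ≠ x' →
      Disjoint (Set.Ico (σ x jstar) (x jstar)) (Set.Ico (σ x' jstar) (x' jstar)))
    (hfar : ∀ x ∈ U, ∀ x' ∈ U, x ≠ x' → x jstar ≤ σ x' jstar →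
      q x ≤ ‖σ x - σ x'‖) :
    ∀ x ∈ U, ∀ x' ∈ U, x ≠ x' →
      Disjoint
        {z : Fin d → ℝ | ‖z - σ x‖ < q x / 3 ∧ q x / 6 < z jstar - σ x jstar}
        {z : Fin d → ℝ | ‖z - σ x'‖ < q x' / 3 ∧ q x' / 6 < z jstar - σ x' jstar} := by
  intro x hx x' hx' hne
  have hI := Set.Ico_disjoint_Ico.mp (hdisj x hx x' hx' hne)
  have h := hlt x hx
  have h' := hlt x' hx'
  rcases min_le_iff.mp hI with h1 | h1 <;> rcases le_max_iff.mp h1 with h2 | h2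
  · exact absurd h2 h.not_ge
  · exact boxes_disjoint_of_lt (h.trans_le h2) (hfar x hx x' hx' hne h2)
  · exact (boxes_disjoint_of_lt (h'.trans_le h2) (hfar x' hx' x hx hne.symm h2)).symm
  · exact absurd h2 h'.not_ge
end

section
/- Let F ⊆ (b₁, b₂) be a finite union of intervals with Lebesgue measure at most L/2. Then there exists θ ∈ (b₁, b₂) \ F such that ∑_{x ∈ X₊(θ)} ℓ_x · L ≤ 8 · M*(θ) · log(M / M*(θ)) · log log₂(M / m). -/
/-!
A continuous-volume version of Seymour's region growing argument. Project everything to the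
coordinate `jstar` and let a cut `θ` sweep `(b1, b2)`. The mass `V θ` to the left of `θ` counts a
point `x` gradually while `θ` runs between `x jstar` and `σ x jstar`, at rate `ℓ x`; this never
exceeds `ℓ x ^ 2` because the distance run is at most `ℓ x` (`leftMass`). Hence `V` is monotone,
`M1 ≤ V ≤ M - M2`, and outside finitely many `θ` its derivative is the sum `S θ` of the lengths
of the separated points.

Write `g v = -v log v` and `u = m / M`, so that `u ≤ V / M ≤ 1 - u` inside `(b1, b2)`. The potential
`cutPotential`, with derivative `2 / g (min v (1 - v))`, increases by `4 log log₂ (M / m)` from `u`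
to `1 - u`. A monotone function dominates the integral of its derivative
(`exists_deriv_mul_le`), and `(b1, b2) \ F` has measure at least `L / 2`, so at some `θ` outside `F`
the derivative of the potential of `V / M` times `L / 2` is at most this increase, i.e.
`S θ * L ≤ 4 M g (min v (1 - v)) log log₂ (M / m)` with `v = V θ / M`. Finally
`min v (1 - v) ≤ Mstar θ / M ≤ 1 / 2`, and on `(0, 1 / 2]` the function `g` loses at most a factor
`2` when its argument grows (`negMulLog_le_two_mul`), which turns the constant `4` into `8`.
-/

open MeasureTheory
open scoped Classical

/-! ### Derivatives of monotone functions -/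

/-- A monotone function on `[a, b]` has, somewhere in any set `A` filling at least half of the
interval, derivative at most `(H b - H a) / ((b - a) / 2)`; finitely many points can be avoided. -/
lemma exists_deriv_mul_le {a b : ℝ} (hab : a < b) {H : ℝ → ℝ} (hH : MonotoneOn H (Set.Icc a b))
    {A : Set ℝ} (hA : MeasurableSet A) (hAsub : A ⊆ Set.Ioo a b)
    (hvol : ENNReal.ofReal ((b - a) / 2) ≤ volume A) {N : Set ℝ} (hN : N.Finite) :
    ∃ θ ∈ A, θ ∉ N ∧ deriv H θ * ((b - a) / 2) ≤ H b - H a := by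
  by_contra! hcon
  set c := (H b - H a) / ((b - a) / 2) with hc
  have hab2 : 0 < (b - a) / 2 := by linarith
  have hle : H a ≤ H b := hH (by simp [hab.le]) (by simp [hab.le]) hab.le
  have hc0 : 0 ≤ c := div_nonneg (by linarith) hab2.le
  have hH' : MonotoneOn H (Set.uIcc a b) := by rwa [Set.uIcc_of_le hab.le]
  have hint := (intervalIntegrable_iff_integrableOn_Ioc_of_le hab.le).1 hH'.intervalIntegrable_deriv
  have htot : ∫ x in Set.Ioc a b, deriv H x ≤ H b - H a := by
    have h := hH'.intervalIntegral_deriv_mem_uIcc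
    rw [Set.uIcc_of_le (by linarith), intervalIntegral.integral_of_le hab.le] at h
    exact h.2
  have hnn : 0 ≤ᵐ[volume.restrict (Set.Ioc a b)] deriv H := by
    rw [Measure.restrict_congr_set Ioo_ae_eq_Ioc.symm]
    refine (ae_restrict_iff' measurableSet_Ioo).2 (Filter.Eventually.of_forall fun x hx => ?_)
    have : derivWithin H (Set.Ioo a b) x = deriv H x := derivWithin_of_isOpen isOpen_Ioo hx
    rw [Pi.zero_apply, ← this]
    exact (hH.mono Set.Ioo_subset_Icc_self).derivWithin_nonneg
  have hsub : A ⊆ Set.Ioc a b := hAsub.trans Set.Ioo_subset_Ioc_self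
  have hAint : IntegrableOn (deriv H) A := hint.mono_set hsub
  have hAle : ∫ x in A, deriv H x ≤ H b - H a :=
    (setIntegral_mono_set hint hnn hsub.eventuallyLE).trans htot
  have hAfin : volume A ≠ ⊤ :=
    ((measure_mono hsub).trans_lt (by simp)).ne
  have hApos : 0 < volume A := lt_of_lt_of_le (by simpa using hab) hvol
  have hae : ∀ᵐ x ∂(volume.restrict A), c < deriv H x := by
    refine (ae_restrict_iff' hA).2 ?_
    filter_upwards [hN.measure_zero volume |> measure_eq_zero_iff_ae_notMem.1] with x hx hxA
    rw [hc, div_lt_iff₀ hab2]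
    exact hcon x hxA hx
  have hconst : IntegrableOn (fun _ : ℝ => c) A := integrableOn_const hAfin
  have hpos : 0 < ∫ x in A, (deriv H x - c) := by
    have hsubint : Integrable (fun x => deriv H x - c) (volume.restrict A) := hAint.sub hconst
    rw [integral_pos_iff_support_of_nonneg_ae _ hsubint]
    · have : ∀ᵐ x ∂(volume.restrict A), x ∈ Function.support fun x => deriv H x - c := by
        filter_upwards [hae] with x hx
        exact (sub_pos.2 hx).ne'
      rw [measure_eq_measure_of_null_sdiff (Set.subset_univ _)]
      · simpa using hApos
      · simpa [ae_iff, Set.sdiff_eq, Set.compl_def] using this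
    · filter_upwards [hae] with x hx
      exact (sub_pos.2 hx).le
  have hsplit : ∫ x in A, (deriv H x - c) = (∫ x in A, deriv H x) - ∫ _ in A, c :=
    integral_sub hAint hconst
  rw [hsplit, setIntegral_const, smul_eq_mul] at hpos
  have hreal : (b - a) / 2 ≤ volume.real A := (ENNReal.ofReal_le_iff_le_toReal hAfin).1 hvol
  have : (b - a) / 2 * c = H b - H a := mul_div_cancel₀ _ hab2.ne'
  nlinarith [mul_le_mul_of_nonneg_right hreal hc0]

/-! ### The potential -/

/-- The potential: the antiderivative of `2 / (-w log w)`, `w = min v (1 - v)`, vanishing at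
`1 / 2`. -/
noncomputable def cutPotential (v : ℝ) : ℝ :=
  if v ≤ 1 / 2 then -2 * Real.log (Real.logb 2 v⁻¹) else 2 * Real.log (Real.logb 2 (1 - v)⁻¹)

lemma negMulLog_pos {v : ℝ} (h0 : 0 < v) (h1 : v < 1) : 0 < Real.negMulLog v := by
  have := Real.log_neg h0 h1
  rw [Real.negMulLog]; nlinarith

lemma hasDerivAt_loglog {v : ℝ} (h0 : 0 < v) (h1 : v < 1) :
    HasDerivAt (fun v => -2 * Real.log (Real.logb 2 v⁻¹)) (2 / Real.negMulLog v) v := by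
  have hl := Real.log_neg h0 h1
  have h2 : 0 < Real.log 2 := Real.log_pos (by norm_num)
  have h : HasDerivAt (fun v => Real.logb 2 v⁻¹) (-(v⁻¹ / Real.log 2)) v := by
    have e : (fun v : ℝ => Real.logb 2 v⁻¹) = -fun v => Real.log v / Real.log 2 := by
      ext w; rw [Real.logb_inv, Real.logb]; rfl
    rw [e]
    exact ((Real.hasDerivAt_log h0.ne').div_const _).neg
  have hne : Real.logb 2 v⁻¹ ≠ 0 := by
    rw [Real.logb_inv, Real.logb]
    exact neg_ne_zero.2 (div_ne_zero hl.ne h2.ne')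
  have e : 2 / Real.negMulLog v = -2 * (-(v⁻¹ / Real.log 2) / Real.logb 2 v⁻¹) := by
    rw [Real.logb_inv, Real.logb, Real.negMulLog]
    have := hl.ne
    field_simp
  rw [e]
  exact (h.log hne).const_mul (-2)

lemma logb_two_inv_half : Real.logb 2 (2⁻¹ : ℝ)⁻¹ = 1 := by
  rw [inv_inv, Real.logb_self_eq_one (by norm_num)]

lemma hasDerivAt_cutPotential {v : ℝ} (h0 : 0 < v) (h1 : v < 1) :
    HasDerivAt cutPotential (2 / Real.negMulLog (min v (1 - v))) v := by
  have hl := hasDerivAt_loglog h0 h1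
  have hr : HasDerivAt (fun v => 2 * Real.log (Real.logb 2 (1 - v)⁻¹))
      (2 / Real.negMulLog (1 - v)) v := by
    have h := hasDerivAt_loglog (v := 1 - v) (by linarith) (by linarith)
    have h' := (h.comp_const_sub 1 v).neg
    rw [neg_neg] at h'
    refine h'.congr_of_eventuallyEq (Filter.Eventually.of_forall fun w => ?_)
    simp
  rw [← hasDerivWithinAt_univ]
  rcases lt_trichotomy v (1 / 2) with h | h | h
  · rw [min_eq_left (by linarith), hasDerivWithinAt_univ]
    refine hl.congr_of_eventuallyEq ?_
    filter_upwards [Iio_mem_nhds h] with w hw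
    rw [cutPotential, if_pos (le_of_lt hw)]
  · rw [min_eq_left (by linarith), ← Set.Iic_union_Ici (a := v)]
    refine HasDerivWithinAt.union ?_ ?_
    · refine hl.hasDerivWithinAt.congr_of_mem (fun w hw => ?_) Set.self_mem_Iic
      rw [cutPotential, if_pos (hw.trans h.le)]
    · have e : 1 - v = v := by linarith
      rw [e] at hr
      refine hr.hasDerivWithinAt.congr_of_mem (fun w hw => ?_) Set.self_mem_Ici
      rcases eq_or_lt_of_le (show v ≤ w from hw) with rfl | hlt
      · -- both branches vanish at the gluing point `1 / 2`
        rw [cutPotential, if_pos h.le, e, h, one_div, logb_two_inv_half]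
        simp
      · rw [cutPotential, if_neg (by linarith)]
  · rw [min_eq_right (by linarith), hasDerivWithinAt_univ]
    refine hr.congr_of_eventuallyEq ?_
    filter_upwards [Ioi_mem_nhds h] with w hw
    rw [cutPotential, if_neg (not_le.2 hw)]

lemma monotoneOn_cutPotential : MonotoneOn cutPotential (Set.Ioo 0 1) := by
  refine monotoneOn_of_deriv_nonneg (convex_Ioo 0 1)
    (fun v hv => (hasDerivAt_cutPotential hv.1 hv.2).continuousAt.continuousWithinAt)
    (fun v hv => ?_) (fun v hv => ?_)
  · rw [interior_Ioo] at hv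
    exact (hasDerivAt_cutPotential hv.1 hv.2).differentiableAt.differentiableWithinAt
  · rw [interior_Ioo] at hv
    rw [(hasDerivAt_cutPotential hv.1 hv.2).deriv]
    refine div_nonneg zero_le_two (negMulLog_pos ?_ ?_).le
    · exact lt_min hv.1 (by linarith [hv.2])
    · exact (min_le_left _ _).trans_lt hv.2

lemma cutPotential_left {u : ℝ} (hu : u ≤ 1 / 2) :
    cutPotential u = -2 * Real.log (Real.logb 2 u⁻¹) := if_pos hu

lemma cutPotential_right {u : ℝ} (hu : u ≤ 1 / 2) :
    cutPotential (1 - u) = 2 * Real.log (Real.logb 2 u⁻¹) := by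
  rcases hu.eq_or_lt with rfl | h
  · rw [cutPotential, if_pos (by norm_num)]
    norm_num
  · rw [cutPotential, if_neg (by linarith)]
    norm_num

/-- On `(0, 1 / 2]` the function `-v log v` is not monotone, but it never drops below half of an
earlier value: by concavity its minimum on `[v, 1 / 2]` is attained at an end, and
`-v log v ≤ 1 / e ≤ log 2`. -/
lemma negMulLog_le_two_mul {v x : ℝ} (h0 : 0 < v) (hvx : v ≤ x) (hx : x ≤ 1 / 2) :
    Real.negMulLog v ≤ 2 * Real.negMulLog x := by
  have hconc := Real.concaveOn_negMulLog.min_le_of_mem_Icc (x := v) (y := 1 / 2) (z := x)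
    h0.le (by norm_num : (0 : ℝ) ≤ 1 / 2) ⟨hvx, hx⟩
  have hhalf : Real.negMulLog (1 / 2) = Real.log 2 / 2 := by
    rw [Real.negMulLog, one_div, Real.log_inv]; ring
  have hl2 := Real.log_two_gt_d9
  have hpos := negMulLog_pos h0 (by linarith : v < 1)
  have hsmall : Real.negMulLog v ≤ 1 / 2 := by
    -- `log (1 / (2 v)) ≤ 1 / (2 v) - 1`, and `log 2 ≤ 1`
    have h := Real.log_le_sub_one_of_pos (show 0 < (2 * v)⁻¹ by positivity)
    rw [Real.log_inv, Real.log_mul two_ne_zero h0.ne'] at h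
    have hl := Real.log_two_lt_d9
    have h3 : -Real.log v ≤ (2 * v)⁻¹ := by linarith
    have h4 := mul_le_mul_of_nonneg_left h3 h0.le
    have h5 : v * (2 * v)⁻¹ = 1 / 2 := by field_simp
    rw [Real.negMulLog]; linarith
  rw [hhalf] at hconc
  rcases min_le_iff.1 hconc with h | h <;> linarith

/-! ### The mass to the left of a cut -/

/-- The part of the mass `l ^ 2` of a point with `jstar`-coordinate `p`, assigned to a centroid
with `jstar`-coordinate `q` that counts as lying to the left of `θ`. Between `p` and `q` it grows
at rate `l`; this is possible because `|p - q| ≤ l`, and the rest of the mass arrives in one jump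
at `max p q`. -/
noncomputable def leftMass (p q l θ : ℝ) : ℝ :=
  if θ < min p q then 0 else if θ < max p q then l * (θ - min p q) else l ^ 2

section leftMass

variable {p q l θ : ℝ}

lemma leftMass_of_lt (hp : θ < p) (hq : θ < q) : leftMass p q l θ = 0 :=
  if_pos (lt_min hp hq)

lemma leftMass_of_ge (hp : p ≤ θ) (hq : q ≤ θ) : leftMass p q l θ = l ^ 2 := by
  rw [leftMass, if_neg (not_lt.2 ((min_le_left p q).trans hp)), if_neg (not_lt.2 (max_le hp hq))]

lemma monotone_leftMass (h0 : 0 ≤ l) (hpq : |p - q| ≤ l) : Monotone (leftMass p q l) := by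
  intro s t hst
  have hd : max p q - min p q ≤ l := by rwa [max_sub_min_eq_abs']
  unfold leftMass
  split_ifs with h1 h2 h3 h4 h5 h6 h7 h8 <;> try linarith
  all_goals first | positivity | nlinarith

lemma leftMass_nonneg (h0 : 0 ≤ l) : 0 ≤ leftMass p q l θ := by
  unfold leftMass
  split_ifs with h1 h2
  · exact le_rfl
  · exact mul_nonneg h0 (by linarith)
  · positivity

lemma leftMass_le (h0 : 0 ≤ l) (hpq : |p - q| ≤ l) : leftMass p q l θ ≤ l ^ 2 := by
  have h := monotone_leftMass h0 hpq (le_max_left θ (max p q))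
  rwa [leftMass_of_ge (l := l) ((le_max_left p q).trans (le_max_right _ _))
    ((le_max_right p q).trans (le_max_right _ _))] at h

lemma hasDerivAt_leftMass (hp : θ ≠ p) (hq : θ ≠ q) :
    HasDerivAt (leftMass p q l) (if ¬((p ≤ θ) ↔ (q ≤ θ)) then l else 0) θ := by
  rcases lt_or_ge θ (min p q) with h | h
  · have hp' := (lt_min_iff.1 h).1
    have hq' := (lt_min_iff.1 h).2
    rw [if_neg (not_not.2 (iff_of_false (not_le.2 hp') (not_le.2 hq')))]
    refine (hasDerivAt_const θ (0 : ℝ)).congr_of_eventuallyEq ?_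
    filter_upwards [Iio_mem_nhds h] with w hw
    exact if_pos hw
  have h' : min p q < θ := lt_of_le_of_ne h (by
    rcases min_choice p q with e | e <;> rw [e] <;> first | exact hp.symm | exact hq.symm)
  rcases lt_or_ge θ (max p q) with g | g
  · have hsep : ¬((p ≤ θ) ↔ (q ≤ θ)) := by
      rcases le_total p q with e | e
      · rw [min_eq_left e] at h; rw [max_eq_right e] at g
        simp [h, g]
      · rw [min_eq_right e] at h; rw [max_eq_left e] at g
        simp [h, g]
    rw [if_pos hsep]
    have hd : HasDerivAt (fun w => l * (w - min p q)) l θ := by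
      simpa using ((hasDerivAt_id θ).sub_const (min p q)).const_mul l
    refine hd.congr_of_eventuallyEq ?_
    filter_upwards [Iio_mem_nhds g, Ioi_mem_nhds h'] with w hw hw'
    rw [leftMass, if_neg (not_lt.2 (le_of_lt hw')), if_pos (show w < max p q from hw)]
  · have hp' : p ≤ θ := (le_max_left p q).trans g
    have hq' : q ≤ θ := (le_max_right p q).trans g
    rw [if_neg (by simp [hp', hq'])]
    refine (hasDerivAt_const θ (l ^ 2)).congr_of_eventuallyEq ?_
    filter_upwards [Ioi_mem_nhds (lt_of_le_of_ne hp' hp.symm),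
      Ioi_mem_nhds (lt_of_le_of_ne hq' hq.symm)] with w hw hw'
    exact leftMass_of_ge (le_of_lt hw) (le_of_lt hw')

end leftMass

/-! ### The cut -/

/-- Lemma (existence of a good cut): let `Y` be a finite set of centroids in
`ℝ^d` whose `jstar`-coordinates are not all equal, with
`b1 = min_{y ∈ Y} y jstar`, `b2 = max_{y ∈ Y} y jstar` and `L = b2 − b1`.
Let `R0` be a finite set of points, each `x ∈ R0` with an assigned centroid
`σ x ∈ Y` and a length `ℓ x ≥ |x jstar − σ x jstar|`, `ℓ x ≥ 0`.  Fix `m > 0`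
and `M = m·|Y| + ∑_{x ∈ R0} (ℓ x)²`.  If `F ⊆ (b1, b2)` is a finite union of
intervals of Lebesgue measure at most `L/2`, then there exists
`θ ∈ (b1, b2) \ F` with
`∑_{x σ-separated by θ} ℓ x · L ≤ 8 · M*(θ) · log(M/M*(θ)) · log log₂(M/m)`. -/
theorem exists_good_cut
    (d : ℕ) (jstar : Fin d)
    (Y : Finset (Fin d → ℝ)) (hY : Y.Nonempty)
    (hYne : ∃ y ∈ Y, ∃ y' ∈ Y, y jstar ≠ y' jstar)
    (R0 : Finset (Fin d → ℝ))
    (σ : (Fin d → ℝ) → (Fin d → ℝ)) (hσ : ∀ x ∈ R0, σ x ∈ Y)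
    (ℓ : (Fin d → ℝ) → ℝ)
    (hℓabs : ∀ x ∈ R0, |x jstar - σ x jstar| ≤ ℓ x)
    (hℓ0 : ∀ x ∈ R0, 0 ≤ ℓ x)
    (m : ℝ) (hm : 0 < m)
    (b1 b2 L M : ℝ)
    (hb1 : b1 = Y.inf' hY (fun y => y jstar))
    (hb2 : b2 = Y.sup' hY (fun y => y jstar))
    (hL : L = b2 - b1)
    (hM : M = m * Y.card + ∑ x ∈ R0, ℓ x ^ 2)
    (F : Set ℝ) (hFsub : F ⊆ Set.Ioo b1 b2)
    (hFint : ∃ (n : ℕ) (I : Fin n → Set ℝ),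
      (∀ i, Convex ℝ (I i)) ∧ F = ⋃ i, I i)
    (hFvol : volume F ≤ ENNReal.ofReal (L / 2))
    (M1 M2 Mstar : ℝ → ℝ)
    (hM1 : ∀ θ, M1 θ = m * (Y.filter fun y => y jstar ≤ θ).card +
      ∑ x ∈ R0.filter fun x => x jstar ≤ θ ∧ σ x jstar ≤ θ, ℓ x ^ 2)
    (hM2 : ∀ θ, M2 θ = m * (Y.filter fun y => θ < y jstar).card +
      ∑ x ∈ R0.filter fun x => θ < x jstar ∧ θ < σ x jstar, ℓ x ^ 2)
    (hMstar : ∀ θ, Mstar θ = min (M / 2) (min (M - M1 θ) (M - M2 θ))) :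
    ∃ θ ∈ Set.Ioo b1 b2, θ ∉ F ∧
      ∑ x ∈ R0.filter fun x => ¬((x jstar ≤ θ) ↔ (σ x jstar ≤ θ)), ℓ x * L ≤
        8 * Mstar θ * Real.log (M / Mstar θ) * Real.log (Real.logb 2 (M / m)) := by
  set p : (Fin d → ℝ) → ℝ := fun x => x jstar with hp
  obtain ⟨y₁, hy₁, hy₁b⟩ : ∃ y ∈ Y, y jstar = b1 := by
    obtain ⟨y, hy, h⟩ := Y.exists_mem_eq_inf' hY p
    exact ⟨y, hy, by rw [hb1, h]⟩
  obtain ⟨y₂, hy₂, hy₂b⟩ : ∃ y ∈ Y, y jstar = b2 := by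
    obtain ⟨y, hy, h⟩ := Y.exists_mem_eq_sup' hY p
    exact ⟨y, hy, by rw [hb2, h]⟩
  have hb1le : ∀ y ∈ Y, b1 ≤ y jstar := fun y hy => hb1 ▸ Finset.inf'_le p hy
  have hleb2 : ∀ y ∈ Y, y jstar ≤ b2 := fun y hy => hb2 ▸ Finset.le_sup' p hy
  have hb12 : b1 < b2 := by
    obtain ⟨y, hy, y', hy', hne⟩ := hYne
    rcases lt_or_gt_of_ne hne with h | h
    · exact ((hb1le y hy).trans_lt h).trans_le (hleb2 y' hy')
    · exact ((hb1le y' hy').trans_lt h).trans_le (hleb2 y hy)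
  -- The mass to the left of `θ`, with each point of `R0` passing to the left as in `leftMass`.
  set V : ℝ → ℝ := fun θ => ∑ y ∈ Y, (if y jstar ≤ θ then m else 0) +
    ∑ x ∈ R0, leftMass (x jstar) (σ x jstar) (ℓ x) θ with hV
  have hM1V : ∀ θ, M1 θ ≤ V θ := by
    intro θ
    rw [hM1, Finset.sum_filter]
    refine add_le_add (le_of_eq ?_) (Finset.sum_le_sum fun x hx => ?_)
    · rw [← Finset.sum_filter, Finset.sum_const, nsmul_eq_mul, mul_comm]
    · split_ifs with h
      · rw [leftMass_of_ge h.1 h.2]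
      · exact leftMass_nonneg (hℓ0 x hx)
  have hVM2 : ∀ θ, V θ + M2 θ ≤ M := by
    intro θ
    have hY' : ∑ y ∈ Y, (if y jstar ≤ θ then m else 0) +
        m * ((Y.filter fun y => θ < y jstar).card : ℝ) = m * Y.card := by
      have e : m * ((Y.filter fun y => θ < y jstar).card : ℝ) =
          ∑ y ∈ Y, if θ < y jstar then m else 0 := by
        rw [← Finset.sum_filter, Finset.sum_const, nsmul_eq_mul, mul_comm]
      rw [e, ← Finset.sum_add_distrib, mul_comm, ← nsmul_eq_mul, ← Finset.sum_const]
      refine Finset.sum_congr rfl fun y _ => ?_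
      rcases le_or_gt (y jstar) θ with h | h
      · simp [h, not_lt.2 h]
      · simp [h, not_le.2 h]
    have hR : ∑ x ∈ R0, leftMass (x jstar) (σ x jstar) (ℓ x) θ +
        ∑ x ∈ R0.filter (fun x => θ < x jstar ∧ θ < σ x jstar), ℓ x ^ 2 ≤
          ∑ x ∈ R0, ℓ x ^ 2 := by
      rw [Finset.sum_filter, ← Finset.sum_add_distrib]
      refine Finset.sum_le_sum fun x hx => ?_
      split_ifs with h
      · rw [leftMass_of_lt h.1 h.2, zero_add]
      · rw [add_zero]; exact leftMass_le (hℓ0 x hx) (hℓabs x hx)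
    rw [hM2, hM]
    simp only [hV]
    linarith
  have hmV : ∀ θ, b1 ≤ θ → m ≤ V θ := by
    intro θ hθ
    have h1 : m ≤ ∑ y ∈ Y, (if y jstar ≤ θ then m else 0) := by
      have h := Finset.single_le_sum (f := fun y : Fin d → ℝ => if y jstar ≤ θ then m else 0)
        (fun y _ => by split_ifs <;> linarith) hy₁
      simpa [hy₁b, hθ] using h
    have h2 : 0 ≤ ∑ x ∈ R0, leftMass (x jstar) (σ x jstar) (ℓ x) θ :=
      Finset.sum_nonneg fun x hx => leftMass_nonneg (hℓ0 x hx)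
    exact h1.trans (le_add_of_nonneg_right h2)
  have hmM2 : ∀ θ, θ < b2 → m ≤ M2 θ := by
    intro θ hθ
    have h1 : 1 ≤ (Y.filter fun y => θ < y jstar).card :=
      Finset.card_pos.2 ⟨y₂, Finset.mem_filter.2 ⟨hy₂, by rwa [hy₂b]⟩⟩
    have h1' : (1 : ℝ) ≤ (Y.filter fun y => θ < y jstar).card := by exact_mod_cast h1
    have h2 : 0 ≤ ∑ x ∈ R0.filter (fun x => θ < x jstar ∧ θ < σ x jstar), ℓ x ^ 2 :=
      Finset.sum_nonneg fun x _ => sq_nonneg _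
    rw [hM2]
    nlinarith
  have hVmono : Monotone V := by
    intro s t hst
    refine add_le_add (Finset.sum_le_sum fun y _ => ?_)
      (Finset.sum_le_sum fun x hx => monotone_leftMass (hℓ0 x hx) (hℓabs x hx) hst)
    by_cases h : y jstar ≤ s
    · simp [h, h.trans hst]
    · rw [if_neg h]; split_ifs <;> linarith
  have hVle : ∀ θ, θ < b2 → V θ ≤ M - m := fun θ hθ => by linarith [hVM2 θ, hmM2 θ hθ]
  have h2m : 2 * m ≤ M := by linarith [hmV b1 le_rfl, hVle b1 hb12]
  have hM0 : 0 < M := by linarith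
  set u : ℝ := m / M with hu
  have hu0 : 0 < u := div_pos hm hM0
  have hu2 : u ≤ 1 / 2 := by rw [hu, div_le_iff₀ hM0]; linarith
  set Λ : ℝ := Real.log (Real.logb 2 (M / m)) with hΛ
  have hΛu : Real.log (Real.logb 2 u⁻¹) = Λ := by rw [hu, inv_div]
  have hΛ0 : 0 ≤ Λ := by
    refine Real.log_nonneg ?_
    rw [Real.le_logb_iff_rpow_le (by norm_num) (div_pos hM0 hm), Real.rpow_one, le_div_iff₀ hm]
    exact h2m
  -- Truncating at `M - m` only matters at the right end, where `V` may jump up to `M`.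
  set H : ℝ → ℝ := fun θ => cutPotential (min (V θ) (M - m) / M) with hH
  have hrange : ∀ θ, b1 ≤ θ → u ≤ min (V θ) (M - m) / M ∧ min (V θ) (M - m) / M ≤ 1 - u := by
    intro θ hθ
    constructor
    · rw [hu]
      gcongr
      exact le_min (hmV θ hθ) (by linarith)
    · have e : 1 - u = (M - m) / M := by rw [hu]; field_simp
      rw [e]
      gcongr
      exact min_le_right _ _
  have hIoo : ∀ θ, b1 ≤ θ → min (V θ) (M - m) / M ∈ Set.Ioo (0 : ℝ) 1 := fun θ hθ =>
    ⟨hu0.trans_le (hrange θ hθ).1, (hrange θ hθ).2.trans_lt (by linarith)⟩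
  have hHmono : MonotoneOn H (Set.Icc b1 b2) := by
    intro s hs t ht hst
    refine monotoneOn_cutPotential (hIoo s hs.1) (hIoo t ht.1) ?_
    gcongr
    exact hVmono hst
  have hHdiff : H b2 - H b1 ≤ 4 * Λ := by
    have h2 : H b2 ≤ cutPotential (1 - u) :=
      monotoneOn_cutPotential (hIoo b2 hb12.le) ⟨by linarith, by linarith⟩ (hrange b2 hb12.le).2
    have h1 : cutPotential u ≤ H b1 :=
      monotoneOn_cutPotential ⟨hu0, by linarith⟩ (hIoo b1 le_rfl) (hrange b1 le_rfl).1
    rw [cutPotential_right hu2, hΛu] at h2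
    rw [cutPotential_left hu2, hΛu] at h1
    linarith
  have hFmeas : MeasurableSet F := by
    obtain ⟨n, I, hI, rfl⟩ := hFint
    exact MeasurableSet.iUnion fun i => (hI i).ordConnected.measurableSet
  have hvol : ENNReal.ofReal ((b2 - b1) / 2) ≤ volume (Set.Ioo b1 b2 \ F) := by
    have h := le_measure_sdiff (μ := volume) (s₁ := Set.Ioo b1 b2) (s₂ := F)
    rw [Real.volume_Ioo] at h
    refine le_trans ?_ h
    refine le_trans (le_of_eq ?_) (tsub_le_tsub_left hFvol _)
    rw [hL, ← ENNReal.ofReal_sub _ (by linarith)]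
    congr 1; ring
  obtain ⟨θ, ⟨hθ, hθF⟩, hθN, hder⟩ := exists_deriv_mul_le hb12 hHmono
    (measurableSet_Ioo.diff hFmeas) Set.sdiff_subset hvol
    (N := ((Y.image p ∪ R0.image p ∪ R0.image fun x => σ x jstar : Finset ℝ) : Set ℝ))
    (Finset.finite_toSet _)
  refine ⟨θ, hθ, hθF, ?_⟩
  simp only [Finset.coe_union, Finset.coe_image, Set.mem_union, Set.mem_image, Finset.mem_coe,
    not_or, not_exists, not_and] at hθN
  obtain ⟨⟨hNY, hNx⟩, hNσ⟩ := hθN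
  set S : ℝ := ∑ x ∈ R0.filter fun x => ¬((x jstar ≤ θ) ↔ (σ x jstar ≤ θ)), ℓ x with hS
  have hVder : HasDerivAt V S θ := by
    have h1 : HasDerivAt (fun θ => ∑ y ∈ Y, (if y jstar ≤ θ then m else 0)) (∑ y ∈ Y, 0) θ := by
      refine HasDerivAt.fun_sum fun y hy => ?_
      rcases lt_or_gt_of_ne (hNY y hy) with h | h
      · refine (hasDerivAt_const θ m).congr_of_eventuallyEq ?_
        filter_upwards [Ioi_mem_nhds h] with w hw
        exact if_pos (le_of_lt hw)
      · refine (hasDerivAt_const θ (0 : ℝ)).congr_of_eventuallyEq ?_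
        filter_upwards [Iio_mem_nhds h] with w hw
        exact if_neg (not_le.2 hw)
    have h2 : HasDerivAt (fun θ => ∑ x ∈ R0, leftMass (x jstar) (σ x jstar) (ℓ x) θ)
        (∑ x ∈ R0, if ¬((x jstar ≤ θ) ↔ (σ x jstar ≤ θ)) then ℓ x else 0) θ :=
      HasDerivAt.fun_sum fun x hx =>
        hasDerivAt_leftMass (Ne.symm (hNx x hx)) (Ne.symm (hNσ x hx))
    have h := h1.add h2
    rw [Finset.sum_const_zero, zero_add, ← Finset.sum_filter] at h
    exact h
  set v : ℝ := V θ / M with hv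
  have hmVθ := hmV θ hθ.1.le
  have hVleθ := hVle θ hθ.2
  have hv0 : 0 < v := div_pos (hm.trans_le hmVθ) hM0
  have hv1 : v < 1 := by rw [hv, div_lt_one hM0]; linarith
  have hHder : deriv H θ = 2 / Real.negMulLog (min v (1 - v)) * (S / M) := by
    have h : HasDerivAt (fun t => cutPotential (V t / M))
        (2 / Real.negMulLog (min v (1 - v)) * (S / M)) θ :=
      HasDerivAt.comp θ (hasDerivAt_cutPotential hv0 hv1) (hVder.div_const M)
    refine (h.congr_of_eventuallyEq ?_).deriv
    filter_upwards [Iio_mem_nhds hθ.2] with w hw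
    simp only [hH]
    rw [min_eq_left (hVle w hw)]
  set w : ℝ := min v (1 - v) with hw
  have hw0 : 0 < w := lt_min hv0 (by linarith)
  have hwle : w < 1 := (min_le_left _ _).trans_lt hv1
  have hg := negMulLog_pos hw0 hwle
  set x : ℝ := Mstar θ / M with hx
  have hx2 : x ≤ 1 / 2 := by
    rw [hx, div_le_iff₀ hM0, hMstar]
    exact (min_le_left _ _).trans (by linarith)
  have hwx : w ≤ x := by
    have hwM : w * M ≤ V θ ∧ w * M ≤ M - V θ := by
      have e1 : v * M = V θ := div_mul_cancel₀ _ hM0.ne'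
      have h1 := mul_le_mul_of_nonneg_right (min_le_left v (1 - v)) hM0.le
      have h2 := mul_le_mul_of_nonneg_right (min_le_right v (1 - v)) hM0.le
      constructor
      · linarith
      · linarith
    rw [hx, le_div_iff₀ hM0, hMstar]
    refine le_min ?_ (le_min ?_ ?_)
    · linarith [hwM.1, hwM.2]
    · linarith [hwM.2, hM1V θ]
    · linarith [hwM.1, hVM2 θ]
  have hgx := negMulLog_le_two_mul hw0 hwx hx2
  have hRHS : Mstar θ * Real.log (M / Mstar θ) = M * Real.negMulLog x := by
    rw [Real.negMulLog, hx, ← inv_div, Real.log_inv]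
    field_simp
  rw [← Finset.sum_mul, ← hS]
  have hSL : S * L ≤ 4 * Λ * (M * Real.negMulLog w) := by
    have h := hder.trans hHdiff
    rw [hHder, ← hL] at h
    have e : 2 / Real.negMulLog w * (S / M) * (L / 2) = S * L / (M * Real.negMulLog w) := by
      field_simp
    rwa [e, div_le_iff₀ (mul_pos hM0 hg)] at h
  calc S * L ≤ 4 * Λ * (M * Real.negMulLog w) := hSL
    _ ≤ 4 * Λ * (M * (2 * Real.negMulLog x)) := by gcongr
    _ = 8 * (Mstar θ * Real.log (M / Mstar θ)) * Λ := by rw [hRHS]; ring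
    _ = _ := by ring
end

section
/- Let u ∈ (0, 1/2) be a real number and let z₁, z₂, z, Δ be nonnegative real numbers satisfying z₁ + z₂ ≤ z + u·Δ and Δ ≤ min{z₁, z₂}. Then z₁^{1+2u} + z₂^{1+2u} ≤ z^{1+2u}. -/
/-!
Let `b ≤ a` be the two numbers `z₁`, `z₂` in decreasing order. Since `Δ ≤ b`, we have
`z ≥ a + (1 - u) b`. By homogeneity the claim reduces to `1 + t ^ p ≤ (1 + (1 - u) t) ^ p` with
`t = b / a ∈ [0, 1]` and `p = 1 + 2u`. Bernoulli's inequality bounds the right side below by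
`1 + p (1 - u) t`, where `p (1 - u) = 1 + u (1 - 2u) ≥ 1`, while `t ^ p ≤ t` because `p ≥ 1`.
-/

/-- The case of ordered arguments `b ≤ a`, with `Δ` replaced by its largest possible value `b`. -/
lemma rpow_add_rpow_le_of_le {u a b z : ℝ} (hu0 : 0 < u) (hu2 : u < 1 / 2)
    (hb : 0 ≤ b) (hab : b ≤ a) (hz : 0 ≤ z) (h : a + (1 - u) * b ≤ z) :
    a ^ (1 + 2 * u) + b ^ (1 + 2 * u) ≤ z ^ (1 + 2 * u) := by
  have hp : 1 ≤ 1 + 2 * u := by linarith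
  rcases (hb.trans hab).eq_or_lt with ha | ha
  · subst ha
    obtain rfl : b = 0 := le_antisymm hab hb
    rw [Real.zero_rpow (by linarith)]
    simpa using Real.rpow_nonneg hz _
  obtain ⟨t, rfl⟩ : ∃ t, b = a * t := ⟨b / a, by field_simp⟩
  have ht0 : 0 ≤ t := nonneg_of_mul_nonneg_right hb ha
  have ht1 : t ≤ 1 := by nlinarith
  have hs : 0 ≤ (1 - u) * t := mul_nonneg (by linarith) ht0
  have hbern := one_add_mul_self_le_rpow_one_add (by linarith : -1 ≤ (1 - u) * t) hp
  have htp : t ^ (1 + 2 * u) ≤ t := by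
    simpa using Real.rpow_le_rpow_of_exponent_ge_of_imp ht0 ht1 hp (by intros; linarith)
  have hcoef : 0 ≤ u * (1 - 2 * u) * t :=
    mul_nonneg (mul_nonneg hu0.le (by linarith)) ht0
  calc a ^ (1 + 2 * u) + (a * t) ^ (1 + 2 * u)
      = a ^ (1 + 2 * u) * (1 + t ^ (1 + 2 * u)) := by
        rw [Real.mul_rpow ha.le ht0]; ring
    _ ≤ a ^ (1 + 2 * u) * (1 + (1 - u) * t) ^ (1 + 2 * u) := by
        gcongr
        nlinarith
    _ = (a * (1 + (1 - u) * t)) ^ (1 + 2 * u) :=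
        (Real.mul_rpow ha.le (by linarith)).symm
    _ ≤ z ^ (1 + 2 * u) :=
        Real.rpow_le_rpow (mul_nonneg ha.le (by linarith)) (by linarith) (by linarith)

/-- Claim: super-convexity. For `u ∈ (0, 1/2)` and nonnegative reals
`z₁, z₂, z, Δ` with `z₁ + z₂ ≤ z + u·Δ` and `Δ ≤ min z₁ z₂`, we have
`z₁^(1+2u) + z₂^(1+2u) ≤ z^(1+2u)`. -/
theorem super_convexity (u z₁ z₂ z Δ : ℝ) (hu0 : 0 < u) (hu2 : u < 1 / 2)
    (hz₁ : 0 ≤ z₁) (hz₂ : 0 ≤ z₂) (hz : 0 ≤ z) (hΔ : 0 ≤ Δ)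
    (hsum : z₁ + z₂ ≤ z + u * Δ) (hmin : Δ ≤ min z₁ z₂) :
    z₁ ^ (1 + 2 * u) + z₂ ^ (1 + 2 * u) ≤ z ^ (1 + 2 * u) := by
  have h₁ := mul_le_mul_of_nonneg_left (hmin.trans (min_le_left _ _)) hu0.le
  have h₂ := mul_le_mul_of_nonneg_left (hmin.trans (min_le_right _ _)) hu0.le
  rcases le_total z₂ z₁ with h | h
  · exact rpow_add_rpow_le_of_le hu0 hu2 hz₂ h hz (by linarith)
  · rw [add_comm]
    exact rpow_add_rpow_le_of_le hu0 hu2 hz₁ h hz (by linarith)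
end

section
/- Let m, M, L be positive real numbers with M ≥ 2m, let I ⊆ (0, L) be a finite set, and let U : (0, L) → ℝ be a non-decreasing function satisfying m ≤ U(z) ≤ M/2 for all z ∈ (0, L), which is differentiable at every point of (0, L) \ I. Then there exists z ∈ (0, L) \ I such that U′(z) ≤ (1/L) · U(z) · log(M/U(z)) · log log₂(M/m). -/
/-!
The function `F z = -log (log (M / U z))` has derivative `U′ / (U · log (M / U))`, and since
`2 ≤ M / U ≤ M / m` its values lie in an interval of length `log (log₂ (M / m))`. If the claim
failed, then `F′ > log (log₂ (M / m)) / L` would hold on `(0, L)` off a finite set; as `F` is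
monotone, its jumps at the exceptional points only go upwards, so a mean value argument
(`mul_sub_lt_of_lt_deriv_off_finset`) makes `F` vary by strictly more than `log (log₂ (M / m))`.
-/

open Set Filter Topology in
/-- Mean value inequality on an open interval, with bounds on the values in place of limits at the
endpoints. Strictness survives the passage to the endpoints because `F z - c * z` already gains a
fixed amount on the middle third of the interval. -/
lemma mul_sub_lt_of_lt_deriv {F : ℝ → ℝ} {c x y A B : ℝ} (hxy : x < y)
    (hb : ∀ z ∈ Ioo x y, A ≤ F z ∧ F z ≤ B)
    (hd : ∀ z ∈ Ioo x y, ∃ d, c < d ∧ HasDerivAt F d z) :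
    c * (y - x) < B - A := by
  have hG : StrictMonoOn (fun z => F z - c * z) (Ioo x y) := by
    have hder : ∀ z ∈ Ioo x y, ∃ d, 0 < d ∧ HasDerivAt (fun z => F z - c * z) d z := by
      intro z hz
      obtain ⟨d, hcd, h⟩ := hd z hz
      refine ⟨d - c, sub_pos.2 hcd, ?_⟩
      have hc := (hasDerivAt_id z).const_mul c
      rw [mul_one] at hc
      exact h.sub hc
    refine strictMonoOn_of_deriv_pos (convex_Ioo x y) ?_ ?_
    · intro z hz
      obtain ⟨d, -, h⟩ := hder z hz
      exact h.continuousAt.continuousWithinAt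
    · intro z hz
      rw [interior_Ioo] at hz
      obtain ⟨d, hd0, h⟩ := hder z hz
      rwa [h.deriv]
  set p := (2 * x + y) / 3 with hp
  set q := (x + 2 * y) / 3 with hq
  have hpq := hG (a := p) ⟨by linarith, by linarith⟩ (b := q) ⟨by linarith, by linarith⟩
    (by linarith)
  simp only at hpq
  have hlim : Tendsto (fun δ : ℝ => c * (y - x - 2 * δ) + ((F q - c * q) - (F p - c * p)))
      (𝓝[>] 0) (𝓝 (c * (y - x - 2 * 0) + ((F q - c * q) - (F p - c * p)))) := by
    refine Tendsto.mono_left ?_ nhdsWithin_le_nhds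
    exact Continuous.tendsto (by fun_prop) 0
  have hle : c * (y - x - 2 * 0) + ((F q - c * q) - (F p - c * p)) ≤ B - A := by
    refine le_of_tendsto hlim ?_
    filter_upwards [Ioo_mem_nhdsGT (show (0 : ℝ) < (y - x) / 3 by linarith)] with δ hδ
    obtain ⟨h0, h1⟩ := hδ
    have hx' : x + δ ∈ Ioo x y := ⟨by linarith, by linarith⟩
    have hy' : y - δ ∈ Ioo x y := ⟨by linarith, by linarith⟩
    have e1 := hG hx' (b := p) ⟨by linarith, by linarith⟩ (by linarith)
    have e2 := hG (a := q) ⟨by linarith, by linarith⟩ hy' (by linarith)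
    simp only at e1 e2
    have := (hb _ hx').1
    have := (hb _ hy').2
    linarith
  linarith

open Set in
/-- A monotone function may jump at finitely many points without harming the mean value
inequality: the interval is split at each exceptional point `i`, where `F i` serves as upper bound
on the left piece and as lower bound on the right piece. -/
lemma mul_sub_lt_of_lt_deriv_off_finset {F : ℝ → ℝ} {c : ℝ} (I : Finset ℝ) :
    ∀ {x y A B : ℝ}, x < y → MonotoneOn F (Ioo x y) →
      (∀ z ∈ Ioo x y, A ≤ F z ∧ F z ≤ B) →
      (∀ z ∈ Ioo x y, z ∉ I → ∃ d, c < d ∧ HasDerivAt F d z) →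
      c * (y - x) < B - A := by
  induction I using Finset.induction_on with
  | empty =>
    intro x y A B hxy _ hb hd
    exact mul_sub_lt_of_lt_deriv hxy hb fun z hz => hd z hz (by simp)
  | insert i s _ ih =>
    intro x y A B hxy hmono hb hd
    by_cases hi : i ∈ Ioo x y
    · have hl : Ioo x i ⊆ Ioo x y := Ioo_subset_Ioo_right hi.2.le
      have hr : Ioo i y ⊆ Ioo x y := Ioo_subset_Ioo_left hi.1.le
      have h1 : c * (i - x) < F i - A := by
        refine ih hi.1 (hmono.mono hl) (fun z hz => ⟨(hb z (hl hz)).1, ?_⟩) fun z hz hzs => ?_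
        · exact hmono (hl hz) hi hz.2.le
        · exact hd z (hl hz) (by simp [hz.2.ne, hzs])
      have h2 : c * (y - i) < B - F i := by
        refine ih hi.2 (hmono.mono hr) (fun z hz => ⟨?_, (hb z (hr hz)).2⟩) fun z hz hzs => ?_
        · exact hmono hi (hr hz) hz.1.le
        · exact hd z (hr hz) (by simp [hz.1.ne', hzs])
      linarith
    · refine ih hxy hmono hb fun z hz hzs => hd z hz ?_
      have : z ≠ i := fun h => hi (h ▸ hz)
      simp [this, hzs]


/-- Lemma (Seymour): let `m, M, L > 0` with `M ≥ 2m`, let `I ⊆ (0, L)` be a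
finite set, and let `U : (0, L) → ℝ` be non-decreasing with
`m ≤ U z ≤ M/2` on `(0, L)` and differentiable at every point of
`(0, L) \ I`.  Then there is `z ∈ (0, L) \ I` with
`U′(z) ≤ (1/L) · U(z) · log(M/U(z)) · log log₂(M/m)`. -/
theorem seymour_mean_value
    (m M L : ℝ) (hm : 0 < m) (hM : 2 * m ≤ M) (hL : 0 < L)
    (I : Finset ℝ) (hI : (I : Set ℝ) ⊆ Set.Ioo 0 L)
    (U : ℝ → ℝ)
    (hmono : MonotoneOn U (Set.Ioo 0 L))
    (hbound : ∀ z ∈ Set.Ioo (0 : ℝ) L, m ≤ U z ∧ U z ≤ M / 2)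
    (hdiff : ∀ z ∈ Set.Ioo (0 : ℝ) L \ (I : Set ℝ),
      DifferentiableWithinAt ℝ U (Set.Ioo 0 L) z) :
    ∃ z ∈ Set.Ioo (0 : ℝ) L \ (I : Set ℝ),
      derivWithin U (Set.Ioo 0 L) z ≤
        (1 / L) * U z * Real.log (M / U z) * Real.log (Real.logb 2 (M / m)) := by
 
  by_contra! hcon
  have hM0 : 0 < M := by linarith
  have hU0 : ∀ z ∈ Set.Ioo 0 L, 0 < U z := fun z hz => hm.trans_le (hbound z hz).1
  have hlog2 : 0 < Real.log 2 := Real.log_pos one_lt_two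
  have h2 : ∀ z ∈ Set.Ioo 0 L, Real.log 2 ≤ Real.log (M / U z) := fun z hz =>
    Real.log_le_log two_pos <| by
      rw [le_div_iff₀ (hU0 z hz)]
      linarith [(hbound z hz).2]
  have hpos : ∀ z ∈ Set.Ioo 0 L, 0 < Real.log (M / U z) := fun z hz => hlog2.trans_le (h2 z hz)
  set C := Real.log (Real.logb 2 (M / m)) with hC
  have hMm : 0 < Real.log (M / m) :=
    Real.log_pos ((one_lt_div hm).2 (by linarith))
  have hCeq : C = -Real.log (Real.log 2) - -Real.log (Real.log (M / m)) := by
    rw [hC, Real.logb, Real.log_div hMm.ne' hlog2.ne']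
    ring
  have key := mul_sub_lt_of_lt_deriv_off_finset (F := fun z => -Real.log (Real.log (M / U z)))
    (c := C / L) I (A := -Real.log (Real.log (M / m))) (B := -Real.log (Real.log 2)) hL
    (fun a ha b hb hab => ?_) (fun z hz => ⟨?_, ?_⟩) (fun z hz hzI => ?_)
  · rw [← hCeq, sub_zero, div_mul_cancel₀ _ hL.ne'] at key
    exact lt_irrefl _ key
  · exact neg_le_neg <| Real.log_le_log (hpos b hb) <|
      Real.log_le_log (div_pos hM0 (hU0 b hb)) <|
        div_le_div_of_nonneg_left hM0.le (hU0 a ha) (hmono ha hb hab)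
  · exact neg_le_neg <| Real.log_le_log (hpos z hz) <|
      Real.log_le_log (div_pos hM0 (hU0 z hz)) <|
        div_le_div_of_nonneg_left hM0.le hm (hbound z hz).1
  · exact neg_le_neg <| Real.log_le_log hlog2 (h2 z hz)
  · have hlt := hcon z ⟨hz, hzI⟩
    have hU := (hdiff z ⟨hz, hzI⟩).hasDerivWithinAt.hasDerivAt (isOpen_Ioo.mem_nhds hz)
    set D := derivWithin U (Set.Ioo 0 L) z
    have hUz := hU0 z hz
    have hlz := hpos z hz
    refine ⟨D / (U z * Real.log (M / U z)), ?_, ?_⟩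
    · rw [lt_div_iff₀ (mul_pos hUz hlz)]
      calc C / L * (U z * Real.log (M / U z))
          = 1 / L * U z * Real.log (M / U z) * C := by ring
        _ < D := hlt
    · have h := ((((hasDerivAt_const z M).div hU hUz.ne').log
        (div_pos hM0 hUz).ne').log hlz.ne').neg
      have e : -((0 * U z - M * D) / U z ^ 2 / (M / U z) / Real.log (M / U z))
          = D / (U z * Real.log (M / U z)) := by
        -- Keeps `field_simp` from rewriting inside the logarithm.
        generalize Real.log (M / U z) = l at hlz
        field_simp
        ring
      rw [← e]
      exact h
end

section
/- Let m, M, L be positive real numbers with M ≥ 2m, let I ⊆ (0, L) be a finite set, and let V : (0, L) → ℝ be a non-decreasing function satisfying m ≤ V(z) ≤ M − m for all z ∈ (0, L), which is differentiable at every point of (0, L) \ I. Then there exists z ∈ (0, L) \ I such that V′(z) ≤ (2/L) · M′ · log(M/M′) · log log₂(M/m), where M′ = min{V(z), M − V(z)}. -/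
/-!
The weight `x ↦ 1 / (x log (M / x))` has the antiderivative `-log log (M / x)`. Gluing this function
on `(0, M / 2]` to its reflection about `M / 2` gives a `C¹` function `F` on `(0, M)` whose
derivative at `v` is `1 / (M' log (M / M'))`, with `M' = min v (M - v)`, and which maps
`[m, M - m]` into `[-R, R]`, where `R = log log₂ (M / m)` (see `hasDerivAt_seymourF`,
`abs_seymourF_le`).

If the conclusion failed, `W = F ∘ V` would be monotone with derivative `> c = 2R / L` off `I`. Since
a monotone function can only jump upwards, the mean value inequality survives the exceptional points
(`mul_sub_le_of_monotoneOn`): `W b - W a ≥ c (b - a)`. As `W` takes values in `[-R, R]` and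
`c L = 2R`, there is no slack, so `W z = c z - R` on all of `(0, L)`, whence `W' = c` at every
point off `I`, a contradiction.
-/

open Set Filter Topology

/-- Mean value inequality for a monotone function that may be discontinuous, and non-differentiable,
at the endpoints and at finitely many interior points: its jumps all go upwards. -/
lemma mul_sub_le_of_monotoneOn (f : ℝ → ℝ) (c : ℝ) (I : Finset ℝ) :
    ∀ a b : ℝ, a < b → MonotoneOn f (Icc a b) →
      (∀ x ∈ Ioo a b, x ∉ I → ∃ d, c ≤ d ∧ HasDerivAt f d x) → c * (b - a) ≤ f b - f a := by
  induction I using Finset.induction_on with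
  | empty =>
    intro a b hab hf hd
    have hdiff : ∀ x ∈ Ioo a b, DifferentiableAt ℝ f x := fun x hx => by
      obtain ⟨d, -, h⟩ := hd x hx (by simp)
      exact h.differentiableAt
    have key : ∀ t ∈ Ioo 0 ((b - a) / 2), c * ((b - t) - (a + t)) ≤ f b - f a := by
      rintro t ⟨ht0, ht⟩
      have h1 : c * ((b - t) - (a + t)) ≤ f (b - t) - f (a + t) := by
        refine (convex_Ioo a b).mul_sub_le_image_sub_of_le_deriv
          (fun x hx => (hdiff x hx).continuousAt.continuousWithinAt) ?_ ?_
          (a + t) ⟨by linarith, by linarith⟩ (b - t) ⟨by linarith, by linarith⟩ (by linarith)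
        · rw [interior_Ioo]
          exact fun x hx => (hdiff x hx).differentiableWithinAt
        · rw [interior_Ioo]
          intro x hx
          obtain ⟨d, hc, h⟩ := hd x hx (by simp)
          rwa [h.deriv]
      have h2 : f (b - t) ≤ f b :=
        hf ⟨by linarith, by linarith⟩ ⟨by linarith, le_rfl⟩ (by linarith)
      have h3 : f a ≤ f (a + t) :=
        hf ⟨le_rfl, by linarith⟩ ⟨by linarith, by linarith⟩ (by linarith)
      linarith
    have hlim : Tendsto (fun t : ℝ => c * ((b - t) - (a + t))) (𝓝[>] 0) (𝓝 (c * (b - a))) := by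
      have : ContinuousAt (fun t : ℝ => c * ((b - t) - (a + t))) 0 := by fun_prop
      have h := this.tendsto
      simp only [sub_zero, add_zero] at h
      exact h.mono_left nhdsWithin_le_nhds
    refine le_of_tendsto hlim ?_
    filter_upwards [Ioo_mem_nhdsGT (show (0 : ℝ) < (b - a) / 2 by linarith)] with t ht
    exact key t ht
  | insert p s hp ih =>
    intro a b hab hf hd
    by_cases hpab : p ∈ Ioo a b
    · have h1 := ih a p hpab.1 (hf.mono (Icc_subset_Icc le_rfl hpab.2.le)) (fun x hx hxs =>
        hd x ⟨hx.1, hx.2.trans hpab.2⟩ (by simp [hxs, hx.2.ne]))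
      have h2 := ih p b hpab.2 (hf.mono (Icc_subset_Icc hpab.1.le le_rfl)) (fun x hx hxs =>
        hd x ⟨hpab.1.trans hx.1, hx.2⟩ (by simp [hxs, hx.1.ne']))
      linarith
    · refine ih a b hab hf fun x hx hxs => hd x hx ?_
      have : x ≠ p := fun h => hpab (h ▸ hx)
      simp [hxs, this]

/-- The function `log (log (M / x) / log 2)`, written so that it is easy to differentiate; the
normalisation makes it vanish at `x = M / 2`. -/
noncomputable def seymourH (M x : ℝ) : ℝ :=
  Real.log (Real.log M - Real.log x) - Real.log (Real.log 2)

/-- The odd (about `M / 2`) gluing of `-seymourH M`, an antiderivative of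
`1 / (M' log (M / M'))` with `M' = min v (M - v)`. -/
noncomputable def seymourF (M v : ℝ) : ℝ :=
  if v ≤ M / 2 then -seymourH M v else seymourH M (M - v)

lemma log_two_le_log_sub {M x : ℝ} (hx : 0 < x) (hxM : x ≤ M / 2) :
    Real.log 2 ≤ Real.log M - Real.log x := by
  rw [← Real.log_div (by linarith) hx.ne']
  exact Real.log_le_log two_pos (by rw [le_div_iff₀ hx]; linarith)

lemma seymourH_half {M : ℝ} (hM : 0 < M) : seymourH M (M / 2) = 0 := by
  unfold seymourH
  rw [Real.log_div hM.ne' two_ne_zero]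
  simp

lemma hasDerivAt_seymourH {M x : ℝ} (hx : 0 < x) (hxM : x ≤ M / 2) :
    HasDerivAt (seymourH M) (-(1 / (x * Real.log (M / x)))) x := by
  have hpos : 0 < Real.log M - Real.log x :=
    (Real.log_pos one_lt_two).trans_le (log_two_le_log_sub hx hxM)
  have h := ((((Real.hasDerivAt_log hx.ne').const_sub (Real.log M)).log hpos.ne').sub_const
    (Real.log (Real.log 2)))
  refine h.congr_deriv ?_
  rw [Real.log_div (by linarith) hx.ne']
  field_simp

lemma seymourH_nonneg {M x : ℝ} (hx : 0 < x) (hxM : x ≤ M / 2) : 0 ≤ seymourH M x :=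
  sub_nonneg.2 (Real.log_le_log (Real.log_pos one_lt_two) (log_two_le_log_sub hx hxM))

lemma seymourH_le {M m x : ℝ} (hm : 0 < m) (hmx : m ≤ x) (hxM : x ≤ M / 2) :
    seymourH M x ≤ Real.log (Real.logb 2 (M / m)) := by
  have hx : 0 < x := hm.trans_le hmx
  have h2 : 0 < Real.log 2 := Real.log_pos one_lt_two
  have hl := log_two_le_log_sub hx hxM
  have hlm : Real.log m ≤ Real.log x := Real.log_le_log hm hmx
  rw [Real.logb, Real.log_div (by linarith) hm.ne', Real.log_div (by linarith) h2.ne']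
  unfold seymourH
  gcongr
  linarith

lemma abs_seymourF_le {M m v : ℝ} (hm : 0 < m) (hmv : m ≤ v) (hvM : v ≤ M - m) :
    |seymourF M v| ≤ Real.log (Real.logb 2 (M / m)) := by
  unfold seymourF
  split_ifs with h
  · rw [abs_neg, abs_of_nonneg (seymourH_nonneg (by linarith) h)]
    exact seymourH_le hm hmv h
  · rw [abs_of_nonneg (seymourH_nonneg (by linarith) (by linarith))]
    exact seymourH_le hm (by linarith) (by linarith)

lemma hasDerivAt_seymourF {M v : ℝ} (hv : 0 < v) (hvM : v < M) :
    HasDerivAt (seymourF M) (1 / (min v (M - v) * Real.log (M / min v (M - v)))) v := by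
  have hM : 0 < M := hv.trans hvM
  have hL : v ≤ M / 2 → HasDerivWithinAt (seymourF M)
      (1 / (min v (M - v) * Real.log (M / min v (M - v)))) (Iic (M / 2)) v := by
    intro h
    rw [min_eq_left (by linarith)]
    refine ((hasDerivAt_seymourH hv h).neg.congr_deriv (neg_neg _)).hasDerivWithinAt.congr ?_ ?_
    · intro x hx
      exact if_pos hx
    · exact if_pos h
  have eqR : ∀ x, M / 2 ≤ x → seymourF M x = seymourH M (M - x) := by
    intro x hx
    unfold seymourF
    split_ifs with h
    · obtain rfl : x = M / 2 := le_antisymm h hx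
      rw [show M - M / 2 = M / 2 by ring, seymourH_half hM, neg_zero]
    · rfl
  have hR : M / 2 ≤ v → HasDerivWithinAt (seymourF M)
      (1 / (min v (M - v) * Real.log (M / min v (M - v)))) (Ici (M / 2)) v := by
    intro h
    rw [min_eq_right (by linarith)]
    have h1 : HasDerivAt (fun x => seymourH M (M - x))
        (1 / ((M - v) * Real.log (M / (M - v)))) v := by
      have := (hasDerivAt_seymourH (M := M) (x := M - v) (by linarith) (by linarith)).comp v
        ((hasDerivAt_id v).const_sub M)
      exact this.congr_deriv (by ring)
    exact h1.hasDerivWithinAt.congr (fun x hx => eqR x hx) (eqR v h)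
  rcases lt_trichotomy v (M / 2) with h | h | h
  · exact (hL h.le).hasDerivAt (Iic_mem_nhds h)
  · have := (hL h.le).union (hR h.ge)
    rwa [Iic_union_Ici, hasDerivWithinAt_univ] at this
  · exact (hR h.le).hasDerivAt (Ici_mem_nhds h)

lemma weight_pos {M v : ℝ} (hv : 0 < v) (hvM : v < M) :
    0 < min v (M - v) * Real.log (M / min v (M - v)) := by
  have h1 : 0 < min v (M - v) := lt_min hv (by linarith)
  have h2 : min v (M - v) < M := (min_le_left _ _).trans_lt hvM
  exact mul_pos h1 (Real.log_pos ((one_lt_div h1).2 h2))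

lemma monotoneOn_seymourF (M : ℝ) : MonotoneOn (seymourF M) (Ioo 0 M) := by
  refine monotoneOn_of_deriv_nonneg (convex_Ioo 0 M)
    (fun x hx => (hasDerivAt_seymourF hx.1 hx.2).continuousAt.continuousWithinAt) ?_ ?_
  · rw [interior_Ioo]
    exact fun x hx => (hasDerivAt_seymourF hx.1 hx.2).differentiableAt.differentiableWithinAt
  · rw [interior_Ioo]
    intro x hx
    rw [(hasDerivAt_seymourF hx.1 hx.2).deriv]
    exact (one_div_pos.2 (weight_pos hx.1 hx.2)).le

theorem seymour_mean_value_two_sided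
    (m M L : ℝ) (hm : 0 < m) (hM : 2 * m ≤ M) (hL : 0 < L)
    (I : Finset ℝ) (hI : (I : Set ℝ) ⊆ Set.Ioo 0 L)
    (V : ℝ → ℝ)
    (hmono : MonotoneOn V (Set.Ioo 0 L))
    (hbound : ∀ z ∈ Set.Ioo (0 : ℝ) L, m ≤ V z ∧ V z ≤ M - m)
    (hdiff : ∀ z ∈ Set.Ioo (0 : ℝ) L \ (I : Set ℝ),
      DifferentiableWithinAt ℝ V (Set.Ioo 0 L) z) :
    ∃ z ∈ Set.Ioo (0 : ℝ) L \ (I : Set ℝ),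
      derivWithin V (Set.Ioo 0 L) z ≤
        (2 / L) * min (V z) (M - V z) * Real.log (M / min (V z) (M - V z)) *
          Real.log (Real.logb 2 (M / m)) := by
  by_contra! hcon
  set R := Real.log (Real.logb 2 (M / m)) with hR
  set c := 2 * R / L with hc
  have hcL : c * L = 2 * R := by rw [hc]; field_simp
  have hV : ∀ z ∈ Ioo (0 : ℝ) L, V z ∈ Ioo 0 M := fun z hz =>
    ⟨by linarith [(hbound z hz).1], by linarith [(hbound z hz).2]⟩
  set W : ℝ → ℝ := fun z => seymourF M (V z) with hW
  have hWmono : MonotoneOn W (Ioo 0 L) := fun x hx y hy hxy =>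
    monotoneOn_seymourF M (hV x hx) (hV y hy) (hmono hx hy hxy)
  have hWb : ∀ z ∈ Ioo (0 : ℝ) L, -R ≤ W z ∧ W z ≤ R := fun z hz =>
    abs_le.1 (abs_seymourF_le hm (hbound z hz).1 (hbound z hz).2)
  have hWd : ∀ z ∈ Ioo (0 : ℝ) L, z ∉ I → ∃ d, c < d ∧ HasDerivAt W d z := by
    intro z hz hzI
    have hVd := (hdiff z ⟨hz, hzI⟩).hasDerivWithinAt.hasDerivAt (Ioo_mem_nhds hz.1 hz.2)
    refine ⟨_, ?_, (hasDerivAt_seymourF (hV z hz).1 (hV z hz).2).comp z hVd⟩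
    have hw := weight_pos (hV z hz).1 (hV z hz).2
    rw [one_div_mul_eq_div, lt_div_iff₀ hw]
    refine lt_of_eq_of_lt ?_ (hcon z ⟨hz, hzI⟩)
    rw [hc]
    ring
  have hmv : ∀ a ∈ Ioo (0 : ℝ) L, ∀ b ∈ Ioo (0 : ℝ) L, a < b → c * (b - a) ≤ W b - W a := by
    intro a ha b hb hab
    refine mul_sub_le_of_monotoneOn W c I a b hab
      (hWmono.mono fun x hx => ⟨ha.1.trans_le hx.1, hx.2.trans_lt hb.2⟩) fun x hx hxI => ?_
    obtain ⟨d, hd, h⟩ := hWd x ⟨ha.1.trans hx.1, hx.2.trans hb.2⟩ hxI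
    exact ⟨d, hd.le, h⟩
  -- The next two bounds let `a → 0` and `b → L` in `hmv`; they coincide because `c L = 2 R`.
  have hlow : ∀ z ∈ Ioo (0 : ℝ) L, c * z - R ≤ W z := by
    intro z hz
    have hlim : Tendsto (fun a : ℝ => c * (z - a) - R) (𝓝[>] 0) (𝓝 (c * z - R)) := by
      have : ContinuousAt (fun a : ℝ => c * (z - a) - R) 0 := by fun_prop
      have h := this.tendsto
      simp only [sub_zero] at h
      exact h.mono_left nhdsWithin_le_nhds
    refine le_of_tendsto hlim ?_
    filter_upwards [Ioo_mem_nhdsGT hz.1] with a ha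
    have haL : a ∈ Ioo (0 : ℝ) L := ⟨ha.1, ha.2.trans hz.2⟩
    linarith [hmv a haL z hz ha.2, (hWb a haL).1]
  have hupp : ∀ z ∈ Ioo (0 : ℝ) L, W z ≤ c * z - R := by
    intro z hz
    have hlim : Tendsto (fun b : ℝ => R - c * (b - z)) (𝓝[<] L) (𝓝 (R - c * (L - z))) := by
      have : ContinuousAt (fun b : ℝ => R - c * (b - z)) L := by fun_prop
      exact this.tendsto.mono_left nhdsWithin_le_nhds
    have : W z ≤ R - c * (L - z) := by
      refine ge_of_tendsto hlim ?_
      filter_upwards [Ioo_mem_nhdsLT hz.2] with b hb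
      have hbL : b ∈ Ioo (0 : ℝ) L := ⟨hz.1.trans hb.1, hb.2⟩
      linarith [hmv z hz b hbL hb.1, (hWb b hbL).2]
    linarith
  obtain ⟨z, hz, hzI⟩ := (Ioo_infinite hL).exists_notMem_finset I
  obtain ⟨d, hd, hWz⟩ := hWd z hz hzI
  have hlin : HasDerivAt (fun x : ℝ => c * x - R) c z := by
    simpa using ((hasDerivAt_id z).const_mul c).sub_const R
  have heq : W =ᶠ[𝓝 z] fun x => c * x - R := by
    filter_upwards [Ioo_mem_nhds hz.1 hz.2] with x hx
    exact le_antisymm (hupp x hx) (hlow x hx)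
  exact hd.ne' (hWz.unique (hlin.congr_of_eventuallyEq heq))
end

section
/- For all real numbers k ≥ 3 and p > 0, if k^{1/p} ≥ p then p ≤ 2·log k / log log k. -/
/-!
Write `L = log k`, so `L > 1`, and take logarithms in the hypothesis: `p * log p ≤ L`. The claim
is `p * log L ≤ 2 * L`, and one compares `p` with `√L`. If `√L ≤ p`, then `log L ≤ 2 * log p` and
the logarithmic hypothesis suffices. If `p < √L`, then `log L = 2 * log √L ≤ 2 * √L` already
gives the bound, whatever `k` and `p` are otherwise.
-/

/-- Claim: for real `k ≥ 3` and `p > 0`, if `k^(1/p) ≥ p` then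
`p ≤ 2·log k / log log k`. -/
theorem log_loglog (k p : ℝ) (hk : 3 ≤ k) (hp : 0 < p)
    (h : p ≤ k ^ ((1 : ℝ) / p)) :
    p ≤ 2 * Real.log k / Real.log (Real.log k) := by
  have hk0 : 0 < k := by linarith
  have hL : 1 < Real.log k := by
    rw [Real.lt_log_iff_exp_lt hk0]
    linarith [Real.exp_one_lt_d9]
  have hpL : p * Real.log p ≤ Real.log k := by
    have h1 := Real.log_le_log hp h
    rw [Real.log_rpow hk0, one_div_mul_eq_div, le_div_iff₀ hp] at h1
    linarith
  generalize Real.log k = L at hL hpL ⊢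
  have hlog : Real.log √L = Real.log L / 2 := Real.log_sqrt (by linarith)
  have hs : 0 < √L := Real.sqrt_pos.2 (by linarith)
  have hsq : √L * √L = L := Real.mul_self_sqrt (by linarith)
  rw [le_div_iff₀ (Real.log_pos hL)]
  rcases le_or_gt √L p with hc | hc
  · have h2 := Real.log_le_log hs hc
    nlinarith
  · have h3 := Real.log_le_sub_one_of_pos hs
    have h4 : Real.log L ≤ 2 * √L := by linarith
    calc p * Real.log L ≤ √L * (2 * √L) :=
          mul_le_mul hc.le h4 (Real.log_pos hL).le hs.le
      _ = 2 * L := by linarith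
end
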